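/- Every ω-standard model of MOST + Π1-Collection satisfies Σ1^P-Foundation. -/

import Mathlib

universe u

/-- de Bruijn-style formulas of the language of set theory, with primitive
bounded quantifiers (`∈`-bounded and `⊆`-bounded) and unbounded quantifiers.
`SF n` is the type of formulas with (at most) `n` free variables. -/
inductive SF : ℕ → Type
  | mem {n} (i j : Fin n) : SF n
  | eq {n} (i j : Fin n) : SF n
  | not {n} (φ : SF n) : SF n
  | and {n} (φ ψ : SF n) : SF n
  | or {n} (φ ψ : SF n) : SF n
  | bexMem {n} (i : Fin n) (φ : SF (n + 1)) : SF n
  | ballMem {n} (i : Fin n) (φ : SF (n + 1)) : SF n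
  | bexSub {n} (i : Fin n) (φ : SF (n + 1)) : SF n
  | ballSub {n} (i : Fin n) (φ : SF (n + 1)) : SF n
  | ex {n} (φ : SF (n + 1)) : SF n
  | all {n} (φ : SF (n + 1)) : SF n

variable {X : Type u}

/-- `a ⊆ b` in the structure `⟨X, E⟩`. -/
def SubE (E : X → X → Prop) (a b : X) : Prop := ∀ z, E z a → E z b

/-- Satisfaction of a formula in the structure `⟨X, E⟩` under a valuation. -/
def SF.Eval (E : X → X → Prop) : {n : ℕ} → SF n → (Fin n → X) → Prop
  | _, .mem i j, v => E (v i) (v j)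
  | _, .eq i j, v => v i = v j
  | _, .not φ, v => ¬ φ.Eval E v
  | _, .and φ ψ, v => φ.Eval E v ∧ ψ.Eval E v
  | _, .or φ ψ, v => φ.Eval E v ∨ ψ.Eval E v
  | _, .bexMem i φ, v => ∃ x, E x (v i) ∧ φ.Eval E (Fin.snoc v x)
  | _, .ballMem i φ, v => ∀ x, E x (v i) → φ.Eval E (Fin.snoc v x)
  | _, .bexSub i φ, v => ∃ x, SubE E x (v i) ∧ φ.Eval E (Fin.snoc v x)
  | _, .ballSub i φ, v => ∀ x, SubE E x (v i) → φ.Eval E (Fin.snoc v x)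
  | _, .ex φ, v => ∃ x, φ.Eval E (Fin.snoc v x)
  | _, .all φ, v => ∀ x, φ.Eval E (Fin.snoc v x)

/-- `Δ₀` formulas: only `∈`-bounded quantifiers. -/
def SF.IsDelta0 : {n : ℕ} → SF n → Prop
  | _, .mem _ _ => True
  | _, .eq _ _ => True
  | _, .not φ => φ.IsDelta0
  | _, .and φ ψ => φ.IsDelta0 ∧ ψ.IsDelta0
  | _, .or φ ψ => φ.IsDelta0 ∧ ψ.IsDelta0
  | _, .bexMem _ φ => φ.IsDelta0
  | _, .ballMem _ φ => φ.IsDelta0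
  | _, .bexSub _ _ => False
  | _, .ballSub _ _ => False
  | _, .ex _ => False
  | _, .all _ => False

/-- Takahashi's class `Δ₀^𝒫`: only `∈`-bounded and `⊆`-bounded quantifiers. -/
def SF.IsDelta0P : {n : ℕ} → SF n → Prop
  | _, .mem _ _ => True
  | _, .eq _ _ => True
  | _, .not φ => φ.IsDelta0P
  | _, .and φ ψ => φ.IsDelta0P ∧ ψ.IsDelta0P
  | _, .or φ ψ => φ.IsDelta0P ∧ ψ.IsDelta0P
  | _, .bexMem _ φ => φ.IsDelta0P
  | _, .ballMem _ φ => φ.IsDelta0P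
  | _, .bexSub _ φ => φ.IsDelta0P
  | _, .ballSub _ φ => φ.IsDelta0P
  | _, .ex _ => False
  | _, .all _ => False

def Delta0C : ∀ n, SF n → Prop := fun _ φ => φ.IsDelta0
def Delta0PC : ∀ n, SF n → Prop := fun _ φ => φ.IsDelta0P
def Sigma1C : ∀ n, SF n → Prop := fun _ φ => ∃ ψ, ψ.IsDelta0 ∧ φ = SF.ex ψ
def Pi1C : ∀ n, SF n → Prop := fun _ φ => ∃ ψ, ψ.IsDelta0 ∧ φ = SF.all ψ
def Sigma1PC : ∀ n, SF n → Prop := fun _ φ => ∃ ψ, ψ.IsDelta0P ∧ φ = SF.ex ψ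
def Pi1PC : ∀ n, SF n → Prop := fun _ φ => ∃ ψ, ψ.IsDelta0P ∧ φ = SF.all ψ
def FullC : ∀ n, SF n → Prop := fun _ _ => True

/-- A Gödel numbering of formulas. -/
def SF.encode : {n : ℕ} → SF n → ℕ
  | _, .mem i j => Nat.pair 0 (Nat.pair i.val j.val)
  | _, .eq i j => Nat.pair 1 (Nat.pair i.val j.val)
  | _, .not φ => Nat.pair 2 φ.encode
  | _, .and φ ψ => Nat.pair 3 (Nat.pair φ.encode ψ.encode)
  | _, .or φ ψ => Nat.pair 4 (Nat.pair φ.encode ψ.encode)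
  | _, .bexMem i φ => Nat.pair 5 (Nat.pair i.val φ.encode)
  | _, .ballMem i φ => Nat.pair 6 (Nat.pair i.val φ.encode)
  | _, .bexSub i φ => Nat.pair 7 (Nat.pair i.val φ.encode)
  | _, .ballSub i φ => Nat.pair 8 (Nat.pair i.val φ.encode)
  | _, .ex φ => Nat.pair 9 φ.encode
  | _, .all φ => Nat.pair 10 φ.encode

/-- A theory (set of sentences) is recursively enumerable if the set of Gödel
numbers of its members is the domain of a partial recursive function. -/
def REset (S : Set (SF 0)) : Prop :=
  ∃ f : ℕ →. ℕ, Nat.Partrec f ∧ ∀ φ : SF 0, φ ∈ S ↔ SF.encode φ ∈ f.Dom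

/-- `⟨X, E⟩ ⊨ S` for a set `S` of sentences. -/
def SatT (E : X → X → Prop) (S : Set (SF 0)) : Prop :=
  ∀ φ ∈ S, SF.Eval E φ (fun i => i.elim0)

/-! ## Axioms and axiom schemes -/

def ExtensionalityAx (E : X → X → Prop) : Prop := ∀ a b, (∀ z, E z a ↔ E z b) → a = b
def EmptySetAx (E : X → X → Prop) : Prop := ∃ a, ∀ z, ¬ E z a
def PairAx (E : X → X → Prop) : Prop := ∀ x y, ∃ a, ∀ z, E z a ↔ (z = x ∨ z = y)
def UnionAx (E : X → X → Prop) : Prop := ∀ a, ∃ b, ∀ z, E z b ↔ ∃ y, E y a ∧ E z y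
def SetDiffAx (E : X → X → Prop) : Prop := ∀ a b, ∃ c, ∀ z, E z c ↔ (E z a ∧ ¬ E z b)
def PowerAx (E : X → X → Prop) : Prop := ∀ a, ∃ p, ∀ z, E z p ↔ SubE E z a
def TransSet (E : X → X → Prop) (t : X) : Prop := ∀ y, E y t → ∀ z, E z y → E z t
def TCoAx (E : X → X → Prop) : Prop := ∀ a, ∃ t, TransSet E t ∧ SubE E a t
def SuccOf (E : X → X → Prop) (x s : X) : Prop := ∀ z, E z s ↔ (E z x ∨ z = x)
def InductiveSet (E : X → X → Prop) (a : X) : Prop :=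
  (∃ e, E e a ∧ ∀ z, ¬ E z e) ∧ ∀ x, E x a → ∃ s, E s a ∧ SuccOf E x s
def InfinityAx (E : X → X → Prop) : Prop := ∃ a, InductiveSet E a
def SetFoundationAx (E : X → X → Prop) : Prop :=
  ∀ z, (∃ x, E x z) → ∃ y, E y z ∧ ∀ x, E x y → ¬ E x z
/-- The axiom of choice: every set of pairwise disjoint nonempty sets has a transversal. -/
def ACAx (E : X → X → Prop) : Prop :=
  ∀ a, (∀ x, E x a → ∃ z, E z x) →
    (∀ x y, E x a → E y a → x ≠ y → ∀ z, E z x → ¬ E z y) →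
    ∃ c, ∀ x, E x a → ∃! z, E z c ∧ E z x

def SeparationScheme (E : X → X → Prop) (C : ∀ n, SF n → Prop) : Prop :=
  ∀ (n : ℕ) (φ : SF (n + 1)), C _ φ → ∀ (p : Fin n → X) (w : X),
    ∃ y, ∀ x, E x y ↔ (E x w ∧ φ.Eval E (Fin.snoc p x))

def CollectionScheme (E : X → X → Prop) (C : ∀ n, SF n → Prop) : Prop :=
  ∀ (n : ℕ) (φ : SF (n + 2)), C _ φ → ∀ (p : Fin n → X) (w : X),
    (∀ x, E x w → ∃ y, φ.Eval E (Fin.snoc (Fin.snoc p x) y)) →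
    ∃ c, ∀ x, E x w → ∃ y, E y c ∧ φ.Eval E (Fin.snoc (Fin.snoc p x) y)

def FoundationScheme (E : X → X → Prop) (C : ∀ n, SF n → Prop) : Prop :=
  ∀ (n : ℕ) (φ : SF (n + 1)), C _ φ → ∀ p : Fin n → X,
    (∃ x, φ.Eval E (Fin.snoc p x)) →
    ∃ y, φ.Eval E (Fin.snoc p y) ∧ ∀ x, E x y → ¬ φ.Eval E (Fin.snoc p x)

/-! ## Theories -/

def ModelMminus (E : X → X → Prop) : Prop :=
  ExtensionalityAx E ∧ EmptySetAx E ∧ PairAx E ∧ UnionAx E ∧ SetDiffAx E ∧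
    TCoAx E ∧ InfinityAx E ∧ SeparationScheme E Delta0C ∧ SetFoundationAx E

def ModelM (E : X → X → Prop) : Prop := ModelMminus E ∧ PowerAx E

def ModelKP (E : X → X → Prop) : Prop :=
  ExtensionalityAx E ∧ PairAx E ∧ UnionAx E ∧ SeparationScheme E Delta0C ∧
    CollectionScheme E Delta0C ∧ FoundationScheme E Pi1C

def ModelKPP (E : X → X → Prop) : Prop :=
  ModelM E ∧ CollectionScheme E Delta0PC ∧ FoundationScheme E Pi1PC

def ModelMOST (E : X → X → Prop) : Prop :=
  ModelM E ∧ SeparationScheme E Sigma1C ∧ ACAx E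

def ModelZF (E : X → X → Prop) : Prop :=
  ExtensionalityAx E ∧ EmptySetAx E ∧ PairAx E ∧ UnionAx E ∧ PowerAx E ∧
    InfinityAx E ∧ SeparationScheme E FullC ∧ CollectionScheme E FullC ∧
    FoundationScheme E FullC

/-! ## Internal set-theoretic machinery -/

/-- `p = {{x}, {x, y}}` (Kuratowski pair). -/
def IsPair (E : X → X → Prop) (p x y : X) : Prop :=
  ∀ z, E z p ↔ ((∀ w, E w z ↔ w = x) ∨ (∀ w, E w z ↔ (w = x ∨ w = y)))

def FunApp (E : X → X → Prop) (f x y : X) : Prop := ∃ q, E q f ∧ IsPair E q x y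

/-- `f` is a function with domain `d`. -/
def IsFuncOn (E : X → X → Prop) (f d : X) : Prop :=
  (∀ q, E q f → ∃ x y, IsPair E q x y ∧ E x d) ∧
  (∀ x y y', FunApp E f x y → FunApp E f x y' → y = y') ∧
  (∀ x, E x d → ∃ y, FunApp E f x y)

/-- `f` is an injective function from `dom` into `cod`. -/
def InjFunInto (E : X → X → Prop) (f dom cod : X) : Prop :=
  IsFuncOn E f dom ∧ (∀ x y, FunApp E f x y → E y cod) ∧
  (∀ x x' y, FunApp E f x y → FunApp E f x' y → x = x')

/-- `|t| ≤ |κ|`. -/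
def CardLe (E : X → X → Prop) (t κ : X) : Prop := ∃ f, InjFunInto E f t κ

def IsOrdinal (E : X → X → Prop) (x : X) : Prop :=
  TransSet E x ∧ ∀ y, E y x → TransSet E y

/-- An (initial ordinal =) cardinal: an ordinal that does not inject into any of
its members. -/
def IsCardinal (E : X → X → Prop) (κ : X) : Prop :=
  IsOrdinal E κ ∧ ∀ β, E β κ → ¬ CardLe E κ β

/-- `t` is the transitive closure of the set `x`. -/
def IsTCset (E : X → X → Prop) (t x : X) : Prop :=
  TransSet E t ∧ SubE E x t ∧ ∀ u, TransSet E u → SubE E x u → SubE E t u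

/-- `t` is the transitive closure of `{x}`. -/
def IsTCsingleton (E : X → X → Prop) (t x : X) : Prop :=
  TransSet E t ∧ E x t ∧ ∀ u, TransSet E u → E x u → SubE E t u

def IsOmega (E : X → X → Prop) (w : X) : Prop :=
  InductiveSet E w ∧ ∀ a, InductiveSet E a → SubE E w a

/-- `⟨X, E⟩` is `ω`-standard: its internal natural numbers are order-isomorphic
to the standard natural numbers. -/
def OmegaStandard (E : X → X → Prop) : Prop :=
  ∀ w, IsOmega E w → ∃ f : ℕ → X, (∀ n, E (f n) w) ∧ (∀ x, E x w → ∃ n, x = f n) ∧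
    ∀ m n : ℕ, (E (f m) (f n) ↔ m < n)

/-- `f` is (a function coding) the cumulative hierarchy `β ↦ V_β` for `β ∈ α`,
using `V_β = ⋃_{γ∈β} 𝒫(V_γ)`. -/
def IsRK (E : X → X → Prop) (α f : X) : Prop :=
  IsOrdinal E α ∧ IsFuncOn E f α ∧
  ∀ β vβ, E β α → FunApp E f β vβ →
    ∀ x, E x vβ ↔ ∃ γ, E γ β ∧ ∃ vγ, FunApp E f γ vγ ∧ SubE E x vγ

/-- Internal rank comparison `ρ(x) ≤ ρ(y)`: `x` belongs to every stage of the
cumulative hierarchy that `y` belongs to. -/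
def RankLe (E : X → X → Prop) (x y : X) : Prop :=
  ∀ α f β v, IsRK E α f → E β α → FunApp E f β v → E y v → E x v

/-- External `n`-th von Neumann natural number. -/
def IsVN (E : X → X → Prop) : ℕ → X → Prop
  | 0, x => ∀ z, ¬ E z x
  | (n + 1), x => ∃ y, IsVN E n y ∧ SuccOf E y x

/-- `a` is the `n`-th infinite cardinal `ℵ_n` (for external `n`, as computed in
the model): `ℵ₀ = ω`, and `ℵ_{n+1}` is the least cardinal above `ℵ_n`. -/
def IsAleph (E : X → X → Prop) : ℕ → X → Prop
  | 0, a => IsOmega E a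
  | (n + 1), a => ∃ b, IsAleph E n b ∧ IsCardinal E a ∧ E b a ∧
      ∀ c, IsCardinal E c → E b c → (c = a ∨ E a c)

/-- `a` is the cardinal `ℵ_ω` of the model: the least limit cardinal above `ω`. -/
def IsAlephOmega (E : X → X → Prop) (a : X) : Prop :=
  (IsCardinal E a ∧ (∃ w, IsOmega E w ∧ E w a) ∧
    (∀ β, E β a → ∃ μ, IsCardinal E μ ∧ E β μ ∧ E μ a)) ∧
  ∀ a', (IsCardinal E a' ∧ (∃ w, IsOmega E w ∧ E w a') ∧
    (∀ β, E β a' → ∃ μ, IsCardinal E μ ∧ E β μ ∧ E μ a')) → (a = a' ∨ E a a')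

/-! ## Internal satisfaction and the constructible hierarchy (for `V = L`) -/

/-- `c = ⟨n, a⟩` with the tag `n` an external natural (internally coded). -/
def TaggedBy (E : X → X → Prop) (c : X) (n : ℕ) (a : X) : Prop :=
  ∃ t, IsVN E n t ∧ IsPair E c t a

def CodeMem (E : X → X → Prop) (c i j : X) : Prop := ∃ p, IsPair E p i j ∧ TaggedBy E c 0 p
def CodeEq (E : X → X → Prop) (c i j : X) : Prop := ∃ p, IsPair E p i j ∧ TaggedBy E c 1 p
def CodeNot (E : X → X → Prop) (c' c : X) : Prop := TaggedBy E c' 2 c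
def CodeAnd (E : X → X → Prop) (c' c₁ c₂ : X) : Prop := ∃ p, IsPair E p c₁ c₂ ∧ TaggedBy E c' 3 p
def CodeEx (E : X → X → Prop) (c' i c : X) : Prop := ∃ p, IsPair E p i c ∧ TaggedBy E c' 4 p

/-- `d` is closed under the internal formation rules for codes of formulas with
variables indexed by elements of `w` (the internal `ω`). -/
def ClosedCode (E : X → X → Prop) (w d : X) : Prop :=
  (∀ i j c, E i w → E j w → CodeMem E c i j → E c d) ∧
  (∀ i j c, E i w → E j w → CodeEq E c i j → E c d) ∧
  (∀ c c', E c d → CodeNot E c' c → E c' d) ∧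
  (∀ c₁ c₂ c', E c₁ d → E c₂ d → CodeAnd E c' c₁ c₂ → E c' d) ∧
  (∀ i c c', E i w → E c d → CodeEx E c' i c → E c' d)

/-- `c` is an internal code of a first-order formula of the language of set theory. -/
def FormCode (E : X → X → Prop) (w c : X) : Prop := ∀ d, ClosedCode E w d → E c d

/-- An internal assignment of elements of `a` to the variables. -/
def IsAssign (E : X → X → Prop) (w a v : X) : Prop :=
  IsFuncOn E v w ∧ ∀ i y, FunApp E v i y → E y a

/-- `v' = v[i ↦ x]`. -/
def UpdateAssign (E : X → X → Prop) (w v : X) (i x v' : X) : Prop :=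
  FunApp E v' i x ∧ ∀ j, E j w → j ≠ i → ∀ y, (FunApp E v j y ↔ FunApp E v' j y)

def PairIn (E : X → X → Prop) (s c v : X) : Prop := ∃ q, E q s ∧ IsPair E q c v

/-- `s` is a (full) satisfaction class for the set structure `⟨a, E⟩`: a set of
pairs ⟨code, assignment⟩ obeying the Tarski conditions. -/
def SatSet (E : X → X → Prop) (w a s : X) : Prop :=
  (∀ q, E q s → ∃ c v, IsPair E q c v ∧ FormCode E w c ∧ IsAssign E w a v) ∧
  (∀ i j c v xi xj, E i w → E j w → CodeMem E c i j → IsAssign E w a v →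
    FunApp E v i xi → FunApp E v j xj → (PairIn E s c v ↔ E xi xj)) ∧
  (∀ i j c v xi xj, E i w → E j w → CodeEq E c i j → IsAssign E w a v →
    FunApp E v i xi → FunApp E v j xj → (PairIn E s c v ↔ xi = xj)) ∧
  (∀ c c' v, FormCode E w c → CodeNot E c' c → IsAssign E w a v →
    (PairIn E s c' v ↔ ¬ PairIn E s c v)) ∧
  (∀ c₁ c₂ c' v, FormCode E w c₁ → FormCode E w c₂ → CodeAnd E c' c₁ c₂ →
    IsAssign E w a v → (PairIn E s c' v ↔ (PairIn E s c₁ v ∧ PairIn E s c₂ v))) ∧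
  (∀ i c c' v, E i w → FormCode E w c → CodeEx E c' i c → IsAssign E w a v →
    (PairIn E s c' v ↔ ∃ x v', E x a ∧ IsAssign E w a v' ∧ UpdateAssign E w v i x v' ∧
      PairIn E s c v'))

/-- `b` is a subset of `a` definable over `⟨a, E⟩` (with parameters from `a`). -/
def DefSub (E : X → X → Prop) (w a s b : X) : Prop :=
  SubE E b a ∧ ∃ c, FormCode E w c ∧ ∃ v, IsAssign E w a v ∧ ∃ i, E i w ∧
    ∀ x, E x b ↔ (E x a ∧ ∃ v', IsAssign E w a v' ∧ UpdateAssign E w v i x v' ∧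
      PairIn E s c v')

/-- `f` codes the constructible hierarchy `β ↦ L_β` for `β ∈ α`, using
`L_β = ⋃_{γ∈β} Def(L_γ)`. -/
def IsLHier (E : X → X → Prop) (w f α : X) : Prop :=
  IsOrdinal E α ∧ IsFuncOn E f α ∧
  ∀ β vβ, E β α → FunApp E f β vβ →
    ∀ x, E x vβ ↔ ∃ γ, E γ β ∧ ∃ vγ, FunApp E f γ vγ ∧ ∃ s, SatSet E w vγ s ∧
      DefSub E w vγ s x

/-- The axiom `V = L`: every set belongs to some level of the constructible hierarchy. -/
def VeqL (E : X → X → Prop) : Prop :=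
  ∀ w, IsOmega E w → ∀ x, ∃ α f β vβ, IsLHier E w f α ∧ E β α ∧ FunApp E f β vβ ∧ E x vβ

/-! ## Extensions -/

/-- The substructure of `⟨X, E⟩` with underlying set `A`. -/
def restrict (E : X → X → Prop) (A : Set X) : A → A → Prop := fun a b => E a.1 b.1

/-- `B` is an end extension of `A` (both substructures of an ambient `⟨X, E⟩`). -/
def EndExtIn (E : X → X → Prop) (A B : Set X) : Prop :=
  A ⊆ B ∧ ∀ x y, x ∈ B → y ∈ A → E x y → x ∈ A

/-- `B` is a powerset-preserving end extension of `A` (within an ambient `⟨X, E⟩`);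
`x ⊆ y` is computed in `B`. -/
def PowExtIn (E : X → X → Prop) (A B : Set X) : Prop :=
  EndExtIn E A B ∧ ∀ x y, x ∈ B → y ∈ A → (∀ z, z ∈ B → E z x → E z y) → x ∈ A

/-- The whole structure `⟨X, E⟩` is an end extension of its substructure on `A`. -/
def EndExtSet (E : X → X → Prop) (A : Set X) : Prop :=
  ∀ x y, y ∈ A → E x y → x ∈ A

/-- `⟨X, E⟩` is a powerset-preserving end extension of its substructure on `A`. -/
def PowExtSet (E : X → X → Prop) (A : Set X) : Prop :=
  EndExtSet E A ∧ ∀ x y, y ∈ A → SubE E x y → x ∈ A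

/-- `⟨X, E⟩` is a rank extension of its substructure on `A`. -/
def RankExtSet (E : X → X → Prop) (A : Set X) : Prop :=
  PowExtSet E A ∧ ∀ x y, y ∈ A → RankLe E x y → x ∈ A

/-- The extension `⟨X, E⟩` of its substructure on `A` is proper and topless. -/
def ToplessSet (E : X → X → Prop) (A : Set X) : Prop :=
  A ≠ Set.univ ∧ ∀ c, (∀ x, E x c → x ∈ A) → c ∈ A

/-- The extension `⟨X, E⟩` of its substructure on `A` is proper and blunt (not topless). -/
def BluntSet (E : X → X → Prop) (A : Set X) : Prop :=
  A ≠ Set.univ ∧ ¬ ToplessSet E A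

/-! ## Weak dependent choice -/

/-- `δ_ω^φ(b, f, p)`: `f` is a function on `ω` with `f(0) = {b}` tracing the
`φ`-successor relation. -/
def IsWDCWitness (E : X → X → Prop) {n : ℕ} (φ : SF (n + 2)) (p : Fin n → X)
    (w b f : X) : Prop :=
  IsFuncOn E f w ∧
  (∃ z v, (∀ u, ¬ E u z) ∧ E z w ∧ FunApp E f z v ∧ ∀ t, E t v ↔ t = b) ∧
  ∀ m m' vm vm', E m w → SuccOf E m m' → E m' w → FunApp E f m vm → FunApp E f m' vm' →
    ((∀ x, E x vm → ∃ y, E y vm' ∧ φ.Eval E (Fin.snoc (Fin.snoc p x) y)) ∧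
     (∀ y, E y vm' → ∀ x, E x vm → φ.Eval E (Fin.snoc (Fin.snoc p x) y)))

/-- The scheme `Δ₀^𝒫-WDC_ω`. -/
def WDComega (E : X → X → Prop) : Prop :=
  ∀ (n : ℕ) (φ : SF (n + 2)), Delta0PC _ φ → ∀ p : Fin n → X,
    (∀ x, ∃ y, φ.Eval E (Fin.snoc (Fin.snoc p x) y)) →
    ∀ w, IsOmega E w → ∀ b, ∃ f, IsWDCWitness E φ p w b f

/-! ## Internal well-founded extensional relations (for `H_{≤κ}`) -/

def RRel (E : X → X → Prop) (R a b : X) : Prop := ∃ p, E p R ∧ IsPair E p a b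

def RelOn (E : X → X → Prop) (R k : X) : Prop :=
  ∀ p, E p R → ∃ a b, IsPair E p a b ∧ E a k ∧ E b k

/-- `BFEXT(R, k)`: `R ⊆ k × k` is extensional on `k`, has a top element, and every
nonempty subset of `k` has an `R`-minimal element. -/
def BFEXT (E : X → X → Prop) (R k : X) : Prop :=
  RelOn E R k ∧
  (∀ a b, E a k → E b k → (∀ c, E c k → (RRel E R c a ↔ RRel E R c b)) → a = b) ∧
  (∃ t, E t k ∧ ∀ b, E b k → b ≠ t → RRel E R b t) ∧
  (∀ S, SubE E S k → (∃ z, E z S) → ∃ m, E m S ∧ ∀ y, E y S → ¬ RRel E R y m)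

/-- `f` is an isomorphism of `⟨k, R⟩` with `⟨T, ∈⟩`. -/
def IsoOnto (E : X → X → Prop) (R k f T : X) : Prop :=
  IsFuncOn E f k ∧ (∀ x y, FunApp E f x y → E y T) ∧
  (∀ y, E y T → ∃ x, E x k ∧ FunApp E f x y) ∧
  (∀ x x' y, FunApp E f x y → FunApp E f x' y → x = x') ∧
  ∀ a b ya yb, E a k → E b k → FunApp E f a ya → FunApp E f b yb →
    (RRel E R a b ↔ E ya yb)

/-- The predicate `Xv = H_{≤κ} = {x : |TC(x)| ≤ κ}`. -/
def HleqPred (E : X → X → Prop) (Xv κ : X) : Prop :=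
  IsCardinal E κ ∧ ∀ x, E x Xv ↔ ∃ t, IsTCset E t x ∧ CardLe E t κ

/-- The explicit conjunction (i) ∧ (ii) ∧ (iii) asserting `Xv = H_{≤κ}`. -/
def ExplicitH (E : X → X → Prop) (Xv κ : X) : Prop :=
  IsCardinal E κ ∧
  (∀ R, BFEXT E R κ → ∃ x f T, E x Xv ∧ E f Xv ∧ E T Xv ∧ IsTCsingleton E T x ∧
    IsoOnto E R κ f T) ∧
  (∀ x, E x Xv → ∃ T f, E T Xv ∧ E f Xv ∧ IsTCsingleton E T x ∧ InjFunInto E f T κ)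

/-!
# `Σ₁^𝒫`-Foundation in `ω`-standard models of `MOST + Π₁`-Collection

Suppose that `C x ↔ ∃ y, ψ x y` with `ψ` in `Π₁` has no `∈`-least element. Let `H(α)` be the set of
all elements of transitive sets that inject into `α`; choice puts every set into some `H(α)`. To a
set `d ⊆ C` assign the set of all `x` in a fixed transitive set for which `H(α)` contains a witness
`y`, where `α` is the least ordinal such that every element of `d` acquires an element of this kind.
Taking `α` least makes the assignment functional and `Σ₂`, so that no dependent choice is needed.
By `ω`-standardness it can be iterated externally along the natural numbers of the model, starting
from a singleton, and every finite stage of the iteration is a set. Collection turns the whole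
sequence into a set, whose union is nonempty and has no `∈`-least element, against set foundation.

Thus `Σ₂`-Foundation holds, and it applies to `Σ₁^𝒫` classes since a quantifier over the subsets of
`a` is a bounded quantifier over `𝒫(a)`, whose graph is `Π₁`, so that `Δ₀^𝒫` formulas are `Δ₂`.
-/

/-! ### Renaming variables -/

/-- Simultaneous renaming of the free variables of a formula. -/
def SF.rename : {n m : ℕ} → SF n → (Fin n → Fin m) → SF m
  | _, _, .mem i j, f => .mem (f i) (f j)
  | _, _, .eq i j, f => .eq (f i) (f j)
  | _, _, .not φ, f => .not (φ.rename f)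
  | _, _, .and φ ψ, f => .and (φ.rename f) (ψ.rename f)
  | _, _, .or φ ψ, f => .or (φ.rename f) (ψ.rename f)
  | _, _, .bexMem i φ, f => .bexMem (f i) (φ.rename (Fin.snoc (Fin.castSucc ∘ f) (Fin.last _)))
  | _, _, .ballMem i φ, f => .ballMem (f i) (φ.rename (Fin.snoc (Fin.castSucc ∘ f) (Fin.last _)))
  | _, _, .bexSub i φ, f => .bexSub (f i) (φ.rename (Fin.snoc (Fin.castSucc ∘ f) (Fin.last _)))
  | _, _, .ballSub i φ, f => .ballSub (f i) (φ.rename (Fin.snoc (Fin.castSucc ∘ f) (Fin.last _)))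
  | _, _, .ex φ, f => .ex (φ.rename (Fin.snoc (Fin.castSucc ∘ f) (Fin.last _)))
  | _, _, .all φ, f => .all (φ.rename (Fin.snoc (Fin.castSucc ∘ f) (Fin.last _)))

theorem SF.snoc_comp_snoc_castSucc {n m : ℕ} (f : Fin n → Fin m) (v : Fin m → X) (x : X) :
    (Fin.snoc v x : Fin (m + 1) → X) ∘ (Fin.snoc (Fin.castSucc ∘ f) (Fin.last m) :
      Fin (n + 1) → Fin (m + 1)) = (Fin.snoc (v ∘ f) x : Fin (n + 1) → X) := by
  simp [Fin.comp_snoc, ← Function.comp_assoc, Fin.snoc_comp_castSucc]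

theorem SF.eval_rename {E : X → X → Prop} {n : ℕ} (φ : SF n) :
    ∀ {m : ℕ} (f : Fin n → Fin m) (v : Fin m → X),
      (φ.rename f).Eval E v ↔ φ.Eval E (v ∘ f) := by
  induction φ <;> intros <;> simp [SF.rename, SF.Eval, snoc_comp_snoc_castSucc, *]

theorem SF.IsDelta0.rename {n : ℕ} {φ : SF n} (h : φ.IsDelta0) :
    ∀ {m : ℕ} (f : Fin n → Fin m), (φ.rename f).IsDelta0 := by
  induction φ <;> intros <;> simp_all [SF.rename, SF.IsDelta0]

namespace MOSTModel

variable {E : X → X → Prop} {m n : ℕ}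

/-! ### Definable predicates -/

/-- An atomic term over the variables `v 0, …, v (n - 1)`: one of these variables, or a parameter
from the model. -/
class IsTerm (f : (Fin n → X) → X) : Prop where
  out : ∃ t : X ⊕ Fin n, ∀ v, f v = Sum.elim id v t

/-- A substitution of atomic terms for variables. -/
class IsSubst (ρ : (Fin n → X) → Fin m → X) : Prop where
  isTerm : ∀ i, IsTerm fun v => ρ v i

instance IsTerm.var (i : Fin n) : IsTerm fun v : Fin n → X => v i :=
  ⟨.inr i, fun _ => rfl⟩

instance IsTerm.const (c : X) : IsTerm fun _ : Fin n → X => c :=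
  ⟨.inl c, fun _ => rfl⟩

instance IsTerm.comp (f : (Fin m → X) → X) (ρ : (Fin n → X) → Fin m → X) [hf : IsTerm f]
    [hρ : IsSubst ρ] : IsTerm fun v => f (ρ v) := by
  obtain ⟨c | i, h⟩ := hf.out
  · exact ⟨.inl c, fun v => h (ρ v)⟩
  · simpa only [h, Sum.elim_inr] using hρ.isTerm i

instance IsTerm.subst (ρ : (Fin n → X) → Fin m → X) [hρ : IsSubst ρ] (i : Fin m) :
    IsTerm fun v => ρ v i :=
  hρ.isTerm i

instance IsSubst.id : IsSubst fun v : Fin n → X => v :=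
  ⟨fun _ => inferInstance⟩

instance IsSubst.const (w : Fin m → X) : IsSubst fun _ : Fin n → X => w :=
  ⟨fun _ => inferInstance⟩

instance IsSubst.reindex {k : ℕ} (ρ : (Fin n → X) → Fin m → X) (r : Fin k → Fin m)
    [IsSubst ρ] : IsSubst fun v => ρ v ∘ r :=
  ⟨fun _ => inferInstanceAs (IsTerm fun v => ρ v _)⟩

instance IsSubst.snoc (ρ : (Fin n → X) → Fin m → X) (f : (Fin n → X) → X) [IsSubst ρ]
    [IsTerm f] : IsSubst fun v => (Fin.snoc (ρ v) (f v) : Fin (m + 1) → X) :=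
  ⟨Fin.lastCases (by simpa) fun i => by simpa using inferInstanceAs (IsTerm fun v => ρ v i)⟩

instance IsSubst.vecEmpty : IsSubst fun _ : Fin n → X => (![] : Fin 0 → X) :=
  ⟨fun i => i.elim0⟩

instance IsSubst.vecCons (ρ : (Fin n → X) → Fin m → X) (f : (Fin n → X) → X) [IsSubst ρ]
    [IsTerm f] : IsSubst fun v => Matrix.vecCons (f v) (ρ v) :=
  ⟨Fin.cases (by simpa) fun i => by simpa using inferInstanceAs (IsTerm fun v => ρ v i)⟩

/-- A class of predicates in finitely many variables. -/
abbrev PredClass (X : Type u) := ∀ n, Set ((Fin n → X) → Prop)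

/-- Membership in a class of predicates, arranged so that instance resolution derives it from the
shape of the predicate. The body of a quantifier is read as a predicate with one more variable,
the last one. -/
class Definable (K : PredClass X) (P : (Fin n → X) → Prop) : Prop where
  mem : P ∈ K n

theorem Definable.of_iff {K : PredClass X} {P Q : (Fin n → X) → Prop} (hP : Definable K P)
    (h : ∀ v, Q v ↔ P v) : Definable K Q := by
  rwa [show Q = P from funext fun v => propext (h v)]

theorem Definable.congr {K : PredClass X} {Q : (Fin n → X) → Prop} (P : (Fin n → X) → Prop)
    [hP : Definable K P] (h : ∀ v, Q v ↔ P v) : Definable K Q :=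
  hP.of_iff h

/-- The predicates defined by `Δ₀` formulas with parameters. -/
def Delta0 (E : X → X → Prop) : PredClass X := fun n =>
  {P | ∃ (m : ℕ) (φ : SF m) (σ : Fin m → X ⊕ Fin n), φ.IsDelta0 ∧
    ∀ v, P v ↔ φ.Eval E (Sum.elim id v ∘ σ)}

/-- The predicates `∃ x, Q x` with `Q` in `K`. -/
def Ex (K : PredClass X) : PredClass X := fun n =>
  {P | ∃ Q : (Fin n → X) → X → Prop,
    (fun v : Fin (n + 1) → X => Q (v ∘ Fin.castSucc) (v (Fin.last n))) ∈ K (n + 1) ∧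
    ∀ v, P v ↔ ∃ x, Q v x}

/-- The negations of the predicates in `K`. -/
def Co (K : PredClass X) : PredClass X := fun n =>
  {P | (fun v => ¬ P v) ∈ K n}

/-- The predicates defined by `Σ₁` formulas with parameters. -/
abbrev Sigma1 (E : X → X → Prop) : PredClass X := Ex (Delta0 E)

/-- The predicates defined by `Π₁` formulas with parameters. -/
abbrev Pi1 (E : X → X → Prop) : PredClass X := Co (Sigma1 E)

/-- The predicates defined by `Σ₂` formulas with parameters. -/
abbrev Sigma2 (E : X → X → Prop) : PredClass X := Ex (Pi1 E)

/-- Classes containing `Δ₀` and closed under substitution of atomic terms, conjunction, disjunction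
and bounded quantification. -/
class IsBoundedClosed (E : outParam (X → X → Prop)) (K : PredClass X) : Prop where
  of_delta0 {n : ℕ} (P : (Fin n → X) → Prop) [Definable (Delta0 E) P] : Definable K P
  subst {m n : ℕ} (P : (Fin m → X) → Prop) (ρ : (Fin n → X) → Fin m → X) [IsSubst ρ] :
    Definable K P → Definable K fun v => P (ρ v)
  and {n : ℕ} (P Q : (Fin n → X) → Prop) [Definable K P] [Definable K Q] :
    Definable K fun v => P v ∧ Q v
  or {n : ℕ} (P Q : (Fin n → X) → Prop) [Definable K P] [Definable K Q] :
    Definable K fun v => P v ∨ Q v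
  bex {n : ℕ} (f : (Fin n → X) → X) (Q : (Fin n → X) → X → Prop) [IsTerm f]
    [Definable K fun v : Fin (n + 1) → X => Q (v ∘ Fin.castSucc) (v (Fin.last n))] :
    Definable K fun v => ∃ x, E x (f v) ∧ Q v x
  ball {n : ℕ} (f : (Fin n → X) → X) (Q : (Fin n → X) → X → Prop) [IsTerm f]
    [Definable K fun v : Fin (n + 1) → X => Q (v ∘ Fin.castSucc) (v (Fin.last n))] :
    Definable K fun v => ∀ x, E x (f v) → Q v x

section Delta0

variable {P Q : (Fin n → X) → Prop}

instance Delta0.mem (f g : (Fin n → X) → X) [hf : IsTerm f] [hg : IsTerm g] :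
    Definable (Delta0 E) fun v => E (f v) (g v) := by
  obtain ⟨⟨s, hs⟩, ⟨t, ht⟩⟩ := hf.out, hg.out
  exact ⟨2, .mem 0 1, ![s, t], trivial, fun v => by simp [SF.Eval, hs, ht]⟩

instance Delta0.eq (f g : (Fin n → X) → X) [hf : IsTerm f] [hg : IsTerm g] :
    Definable (Delta0 E) fun v => f v = g v := by
  obtain ⟨⟨s, hs⟩, ⟨t, ht⟩⟩ := hf.out, hg.out
  exact ⟨2, .eq 0 1, ![s, t], trivial, fun v => by simp [SF.Eval, hs, ht]⟩

instance Delta0.not [hP : Definable (Delta0 E) P] : Definable (Delta0 E) fun v => ¬ P v :=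
  let ⟨m, φ, σ, hφ, h⟩ := hP.mem
  ⟨m, .not φ, σ, hφ, fun v => not_congr (h v)⟩

instance Delta0.and [hP : Definable (Delta0 E) P] [hQ : Definable (Delta0 E) Q] :
    Definable (Delta0 E) fun v => P v ∧ Q v := by
  obtain ⟨m, φ, σ, hφ, h⟩ := hP.mem
  obtain ⟨m', φ', σ', hφ', h'⟩ := hQ.mem
  refine ⟨m + m', .and (φ.rename (Fin.castAdd m')) (φ'.rename (Fin.natAdd m)), Fin.append σ σ',
    ⟨hφ.rename _, hφ'.rename _⟩, fun v => ?_⟩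
  simp only [SF.Eval, SF.eval_rename, h, h', Function.comp_assoc]
  simp [Function.comp_def]

instance Delta0.bex (f : (Fin n → X) → X) [hf : IsTerm f] (Q : (Fin n → X) → X → Prop)
    [hQ : Definable (Delta0 E) fun v : Fin (n + 1) → X => Q (v ∘ Fin.castSucc) (v (Fin.last n))] :
    Definable (Delta0 E) fun v => ∃ x, E x (f v) ∧ Q v x := by
  obtain ⟨m, φ, σ, hφ, h⟩ := hQ.mem
  obtain ⟨t, ht⟩ := hf.out
  have hσ : ∀ i, ∃ (s : X ⊕ Fin n) (j : Fin (m + 2)), ∀ (v : Fin n → X) (x : X),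
      ∀ w : Fin m → X, w i = Sum.elim id v s →
        Sum.elim id (Fin.snoc v x) (σ i) = (Fin.snoc (Fin.snoc w (f v)) x : Fin (m + 2) → X) j := by
    intro i
    rcases σ i with c | k
    · exact ⟨.inl c, i.castSucc.castSucc, fun v x w hw => by simp [hw]⟩
    · induction k using Fin.lastCases with
      | last => exact ⟨t, Fin.last _, fun v x w _ => by simp⟩
      | cast k => exact ⟨.inr k, i.castSucc.castSucc, fun v x w hw => by simp [hw]⟩
  choose s ρ hρ using hσ
  refine ⟨m + 1, .bexMem (Fin.last m) (φ.rename ρ), Fin.snoc s t, hφ.rename ρ, fun v => ?_⟩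
  simp only [SF.Eval, SF.eval_rename, Fin.comp_snoc, Fin.snoc_last, ← ht]
  refine exists_congr fun x => and_congr_right fun _ => ?_
  have hx := h (Fin.snoc v x)
  simp only [Fin.snoc_comp_castSucc, Fin.snoc_last] at hx
  rw [hx, show Sum.elim id (Fin.snoc v x) ∘ σ =
    (Fin.snoc (Fin.snoc (Sum.elim id v ∘ s) (f v)) x : Fin (m + 2) → X) ∘ ρ from
    funext fun i => hρ i v x _ rfl]

instance Delta0.isBoundedClosed : IsBoundedClosed E (Delta0 E) where
  of_delta0 _ _ := inferInstance
  subst P ρ hρ hP := by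
    obtain ⟨m, φ, σ, hφ, h⟩ := hP.mem
    choose τ hτ using fun i => (hρ.isTerm i).out
    refine ⟨m, φ, Sum.elim .inl τ ∘ σ, hφ, fun v => (h _).trans (iff_of_eq ?_)⟩
    congr 1
    funext i
    rcases hi : σ i with c | j <;> simp [hi, hτ]
  and P Q _ _ := inferInstance
  or P Q _ _ := .congr (fun v => ¬ (¬ P v ∧ ¬ Q v)) fun v => or_iff_not_and_not
  bex f Q _ _ := inferInstance
  ball f Q _ _ := .congr (fun v => ¬ ∃ x, E x (f v) ∧ ¬ Q v x) fun v => by push Not; rfl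

end Delta0

section Instances

variable {K : PredClass X} {P Q : (Fin n → X) → Prop}

attribute [instance] IsBoundedClosed.of_delta0 IsBoundedClosed.and IsBoundedClosed.or
  IsBoundedClosed.bex IsBoundedClosed.ball

instance IsBoundedClosed.imp [IsBoundedClosed E K] [Definable K fun v => ¬ P v] [Definable K Q] :
    Definable K fun v => P v → Q v :=
  .congr (fun v => ¬ P v ∨ Q v) fun _ => imp_iff_not_or

instance Delta0.iff [Definable (Delta0 E) P] [Definable (Delta0 E) Q] :
    Definable (Delta0 E) fun v => P v ↔ Q v :=
  .congr (fun v => (P v → Q v) ∧ (Q v → P v)) fun _ => iff_iff_implies_and_implies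

theorem definable_co : Definable (Co K) P ↔ Definable K fun v => ¬ P v :=
  ⟨fun h => ⟨h.mem⟩, fun h => ⟨h.mem⟩⟩

instance Co.not [Definable K P] : Definable (Co K) fun v => ¬ P v :=
  definable_co.2 (.congr P fun _ => not_not)

instance Co.isBoundedClosed [IsBoundedClosed E K] : IsBoundedClosed E (Co K) where
  of_delta0 _ _ := definable_co.2 inferInstance
  subst P ρ _ hP := definable_co.2 (IsBoundedClosed.subst (fun v => ¬ P v) ρ (definable_co.1 hP))
  and P Q hP hQ := by
    have := definable_co.1 hP; have := definable_co.1 hQ; apply definable_co.2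
    exact .congr (fun v => ¬ P v ∨ ¬ Q v) fun v => not_and_or
  or P Q hP hQ := by
    have := definable_co.1 hP; have := definable_co.1 hQ; apply definable_co.2
    exact .congr (fun v => ¬ P v ∧ ¬ Q v) fun v => not_or
  bex f Q _ hQ := by
    have := definable_co.1 hQ; apply definable_co.2
    exact .congr (fun v => ∀ x, E x (f v) → ¬ Q v x) fun v => by push Not; rfl
  ball f Q _ hQ := by
    have := definable_co.1 hQ; apply definable_co.2
    exact .congr (fun v => ∃ x, E x (f v) ∧ ¬ Q v x) fun v => by push Not; rfl

theorem definable_ex : Definable (Ex K) P ↔ ∃ Q : (Fin n → X) → X → Prop,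
    Definable K (fun v : Fin (n + 1) → X => Q (v ∘ Fin.castSucc) (v (Fin.last n))) ∧
    ∀ v, P v ↔ ∃ x, Q v x :=
  ⟨fun ⟨Q, hQ, h⟩ => ⟨Q, ⟨hQ⟩, h⟩, fun ⟨Q, hQ, h⟩ => ⟨Q, hQ.mem, h⟩⟩

theorem Ex.of_exists (Q : (Fin n → X) → X → Prop)
    [hQ : Definable K fun v : Fin (n + 1) → X => Q (v ∘ Fin.castSucc) (v (Fin.last n))] :
    Definable (Ex K) fun v => ∃ x, Q v x :=
  definable_ex.2 ⟨Q, hQ, fun _ => Iff.rfl⟩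

theorem IsBoundedClosed.subst₂ [IsBoundedClosed E K] {Q : (Fin n → X) → X → Prop}
    (hQ : Definable K fun v : Fin (n + 1) → X => Q (v ∘ Fin.castSucc) (v (Fin.last n)))
    (ρ : (Fin m → X) → Fin n → X) (f : (Fin m → X) → X) [IsSubst ρ] [IsTerm f] :
    Definable K fun v => Q (ρ v) (f v) := by
  have := IsBoundedClosed.subst _ (fun v => (Fin.snoc (ρ v) (f v) : Fin (n + 1) → X)) hQ
  simpa only [Fin.snoc_comp_castSucc, Fin.snoc_last] using this

theorem Definable.of₂ [IsBoundedClosed E K] {Q : X → X → Prop}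
    (hQ : Definable K fun v : Fin 2 → X => Q (v 0) (v 1)) (f g : (Fin n → X) → X) [IsTerm f]
    [IsTerm g] : Definable K fun v => Q (f v) (g v) :=
  IsBoundedClosed.subst _ (fun v => ![f v, g v]) hQ

theorem Definable.of₃ [IsBoundedClosed E K] {Q : X → X → X → Prop}
    (hQ : Definable K fun v : Fin 3 → X => Q (v 0) (v 1) (v 2)) (f g k : (Fin n → X) → X)
    [IsTerm f] [IsTerm g] [IsTerm k] : Definable K fun v => Q (f v) (g v) (k v) :=
  IsBoundedClosed.subst _ (fun v => ![f v, g v, k v]) hQ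

end Instances

/-! ### Models of `M` and of `MOST + Π₁-Collection` -/

/-- The structure `⟨X, E⟩` is a model of `M`. -/
class ModelsM (E : X → X → Prop) : Prop where
  modelM : ModelM E

/-- The structure `⟨X, E⟩` is a model of `MOST + Π₁-Collection`. -/
class ModelsMOSTColl (E : X → X → Prop) : Prop extends ModelsM E where
  separation : SeparationScheme E Sigma1C
  choice : ACAx E
  collection : CollectionScheme E Pi1C

theorem Delta0.exists_formula {P : (Fin n → X) → Prop} (hP : Definable (Delta0 E) P) (c : X) :
    ∃ (m : ℕ) (φ : SF (m + n)) (p : Fin m → X), φ.IsDelta0 ∧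
      ∀ v, φ.Eval E (Fin.append p v) ↔ P v := by
  obtain ⟨m, φ, σ, hφ, h⟩ := hP.mem
  refine ⟨m, φ.rename fun i => Sum.elim (fun _ => Fin.castAdd n i) (Fin.natAdd m) (σ i),
    fun i => Sum.elim id (fun _ => c) (σ i), hφ.rename _, fun v => ?_⟩
  rw [SF.eval_rename, h]
  refine iff_of_eq (congrArg _ (funext fun i => ?_))
  rcases hi : σ i with a | j <;> simp [hi]

/-- Separation for the predicates in `K`. -/
class HasSeparation (E : outParam (X → X → Prop)) (K : PredClass X) : Prop where
  separation (Q : X → Prop) [Definable K fun v : Fin 1 → X => Q (v 0)] (w : X) :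
    ∃ y, ∀ x, E x y ↔ E x w ∧ Q x

open HasSeparation (separation)

instance Delta0.hasSeparation [ModelsM E] : HasSeparation E (Delta0 E) where
  separation Q hQ w := by
    obtain ⟨m, φ, p, hφ, h⟩ := Delta0.exists_formula hQ w
    obtain ⟨y, hy⟩ := (ModelsM.modelM (E := E)).1.2.2.2.2.2.2.2.1 m φ hφ p w
    refine ⟨y, fun x => (hy x).trans (and_congr_right fun _ => ?_)⟩
    simpa [Fin.append_right_eq_snoc] using h ![x]

section Coll

variable [ModelsMOSTColl E]

instance Sigma1.hasSeparation : HasSeparation E (Sigma1 E) where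
  separation Q hQ w := by
    obtain ⟨R, hR, hQR⟩ := definable_ex.1 hQ
    obtain ⟨m, φ, p, hφ, h⟩ := Delta0.exists_formula hR w
    obtain ⟨y, hy⟩ := ModelsMOSTColl.separation (E := E) m (.ex φ) ⟨φ, hφ, rfl⟩ p w
    refine ⟨y, fun x => (hy x).trans (and_congr_right fun _ => (exists_congr fun z => ?_).trans
      (hQR ![x]).symm)⟩
    have hz := h (Fin.snoc ![x] z)
    rwa [Fin.append_snoc, Fin.append_right_eq_snoc, Fin.snoc_comp_castSucc, Fin.snoc_last] at hz

instance Pi1.hasSeparation : HasSeparation E (Pi1 E) where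
  separation Q hQ w := by
    have := definable_co.1 hQ
    obtain ⟨y, hy⟩ := separation (Sigma1 E) (fun x => ¬ Q x) w
    obtain ⟨z, hz⟩ := separation (Delta0 E) (fun x => ¬ E x y) w
    exact ⟨z, fun x => by grind⟩

theorem collection_pi1 (R : X → X → Prop)
    [hR : Definable (Pi1 E) fun v : Fin 2 → X => R (v 0) (v 1)] {w : X}
    (hw : ∀ x, E x w → ∃ y, R x y) : ∃ c, ∀ x, E x w → ∃ y, E y c ∧ R x y := by
  obtain ⟨Q, hQ, hRQ⟩ := definable_ex.1 (definable_co.1 hR)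
  obtain ⟨m, φ, p, hφ, h⟩ := Delta0.exists_formula hQ w
  have hφR (x y : X) : (SF.all (.not φ)).Eval E (Fin.snoc (Fin.snoc p x) y) ↔ R x y := by
    have hxy : (![x, y] : Fin 2 → X) = Fin.snoc ![x] y := by ext i; fin_cases i <;> rfl
    rw [← @not_not (R x y)]
    refine Iff.trans ?_ (not_congr (hRQ ![x, y])).symm
    rw [not_exists, hxy]
    refine forall_congr' fun z => not_congr ?_
    have hz := h (Fin.snoc (Fin.snoc ![x] y : Fin 2 → X) z)
    rwa [Fin.append_snoc, Fin.append_snoc, Fin.append_right_eq_snoc, Fin.snoc_comp_castSucc,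
      Fin.snoc_last] at hz
  have := ModelsMOSTColl.collection (E := E) m (.all (.not φ)) ⟨.not φ, hφ, rfl⟩ p w
  simp only [hφR] at this
  exact this hw

end Coll

/-! ### Closure of `Σ₁` and `Σ₂` -/

section Closure

variable {K : PredClass X}

theorem ModelsM.extensionality [ModelsM E] {a b : X} (h : ∀ z, E z a ↔ E z b) : a = b :=
  (ModelsM.modelM (E := E)).1.1 a b h

theorem ModelsM.nonempty (E : X → X → Prop) [ModelsM E] : Nonempty X :=
  (ModelsM.modelM (E := E)).1.2.1.nonempty

theorem ModelsM.exists_pair [ModelsM E] (x y : X) : ∃ a, ∀ z, E z a ↔ z = x ∨ z = y :=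
  (ModelsM.modelM (E := E)).1.2.2.1 x y

instance (priority := low) Ex.of_base [ModelsM E] [IsBoundedClosed E K]
    (P : (Fin n → X) → Prop) [hP : Definable K P] : Definable (Ex K) P := by
  have := ModelsM.nonempty E
  have := IsBoundedClosed.subst P (fun v : Fin (n + 1) → X => v ∘ Fin.castSucc) hP
  exact definable_ex.2 ⟨fun v _ => P v, this, fun v => by simp⟩

instance (priority := low) Pi1.of_delta0 [ModelsM E] (P : (Fin n → X) → Prop)
    [Definable (Delta0 E) P] : Definable (Pi1 E) P :=
  definable_co.2 inferInstance

instance (priority := low) Sigma2.of_sigma1 [ModelsM E] (P : (Fin n → X) → Prop)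
    [hP : Definable (Sigma1 E) P] : Definable (Sigma2 E) P := by
  obtain ⟨Q, hQ, h⟩ := definable_ex.1 hP
  exact definable_ex.2 ⟨Q, inferInstance, h⟩

theorem Ex.subst [IsBoundedClosed E K] (P : (Fin m → X) → Prop) (ρ : (Fin n → X) → Fin m → X)
    [IsSubst ρ] (hP : Definable (Ex K) P) : Definable (Ex K) fun v => P (ρ v) := by
  obtain ⟨Q, hQ, h⟩ := definable_ex.1 hP
  have : IsSubst fun v : Fin (n + 1) → X => ρ (v ∘ Fin.castSucc) :=
    ⟨fun i => IsTerm.comp (fun v => ρ v i) fun v => v ∘ Fin.castSucc⟩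
  exact definable_ex.2 ⟨_, IsBoundedClosed.subst₂ hQ _ _, fun v => h (ρ v)⟩

/-- Two unbounded existential quantifiers are merged by bounding both of them by a single set, the
pair of the two witnesses. -/
theorem Ex.of_exists₂ [ModelsM E] [IsBoundedClosed E K] {Q : (Fin n → X) → X → X → Prop}
    (hQ : Definable K fun v : Fin (n + 2) → X =>
      Q ((v ∘ Fin.castSucc) ∘ Fin.castSucc) ((v ∘ Fin.castSucc) (Fin.last n))
        (v (Fin.last (n + 1)))) :
    Definable (Ex K) fun v => ∃ x y, Q v x y := by
  have := IsBoundedClosed.subst _ (fun v : Fin (n + 3) → X =>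
    (Fin.snoc (Fin.snoc (((v ∘ Fin.castSucc) ∘ Fin.castSucc) ∘ Fin.castSucc)
      ((v ∘ Fin.castSucc) (Fin.last (n + 1))) : Fin (n + 1) → X) (v (Fin.last (n + 2))) :
      Fin (n + 2) → X)) hQ
  simp only [Fin.snoc_comp_castSucc, Fin.snoc_last] at this
  have := Ex.of_exists (K := K) fun (v : Fin n → X) z => ∃ x, E x z ∧ ∃ y, E y z ∧ Q v x y
  refine this.of_iff fun v => ⟨?_, ?_⟩
  · rintro ⟨x, y, h⟩
    obtain ⟨z, hz⟩ := ModelsM.exists_pair (E := E) x y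
    exact ⟨z, x, by simp [hz], y, by simp [hz], h⟩
  · rintro ⟨z, x, -, y, -, h⟩
    exact ⟨x, y, h⟩

instance Ex.ex [ModelsM E] [IsBoundedClosed E K] (Q : (Fin n → X) → X → Prop)
    [hQ : Definable (Ex K) fun v : Fin (n + 1) → X => Q (v ∘ Fin.castSucc) (v (Fin.last n))] :
    Definable (Ex K) fun v => ∃ x, Q v x := by
  obtain ⟨R, hR, h⟩ := definable_ex.1 hQ
  have := Ex.of_exists₂ (Q := fun (v : Fin n → X) x y => R (Fin.snoc v x) y) <|
    IsBoundedClosed.subst₂ hR (fun v : Fin (n + 2) → X =>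
      (Fin.snoc ((v ∘ Fin.castSucc) ∘ Fin.castSucc) ((v ∘ Fin.castSucc) (Fin.last n)) :
        Fin (n + 1) → X)) fun v => v (Fin.last (n + 1))
  exact this.of_iff fun v => exists_congr fun x => by
    simpa [Fin.snoc_comp_castSucc] using h (Fin.snoc v x)

instance Co.all [ModelsM E] [IsBoundedClosed E K] (Q : (Fin n → X) → X → Prop)
    [hQ : Definable (Co (Ex K)) fun v : Fin (n + 1) → X => Q (v ∘ Fin.castSucc) (v (Fin.last n))] :
    Definable (Co (Ex K)) fun v => ∀ x, Q v x := by
  have := definable_co.1 hQ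
  exact definable_co.2 (.congr (fun v => ∃ x, ¬ Q v x) fun v => not_forall)

theorem Ex.and [ModelsM E] [IsBoundedClosed E K] {P Q : (Fin n → X) → Prop}
    (hP : Definable (Ex K) P) (hQ : Definable (Ex K) Q) :
    Definable (Ex K) fun v => P v ∧ Q v := by
  obtain ⟨P', hP', h⟩ := definable_ex.1 hP
  obtain ⟨Q', hQ', h'⟩ := definable_ex.1 hQ
  have := IsBoundedClosed.subst₂ hP' (fun v : Fin (n + 2) → X =>
    (v ∘ Fin.castSucc) ∘ Fin.castSucc) fun v => (v ∘ Fin.castSucc) (Fin.last n)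
  have := IsBoundedClosed.subst₂ hQ' (fun v : Fin (n + 2) → X =>
    (v ∘ Fin.castSucc) ∘ Fin.castSucc) fun v => v (Fin.last (n + 1))
  have := Ex.of_exists₂ (K := K) (Q := fun v x y => P' v x ∧ Q' v y) inferInstance
  exact this.of_iff fun v => by rw [h, h', exists_and_exists_comm]

/-- The witness quantifier and the bounded quantifier trade places. -/
theorem Ex.bex [IsBoundedClosed E K] (f : (Fin n → X) → X) [IsTerm f]
    (Q : (Fin n → X) → X → Prop)
    (hQ : Definable (Ex K) fun v : Fin (n + 1) → X => Q (v ∘ Fin.castSucc) (v (Fin.last n))) :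
    Definable (Ex K) fun v => ∃ x, E x (f v) ∧ Q v x := by
  obtain ⟨R, hR, h⟩ := definable_ex.1 hQ
  have hQR (v : Fin n → X) (x : X) : Q v x ↔ ∃ y, R (Fin.snoc v x) y := by
    simpa [Fin.snoc_comp_castSucc] using h (Fin.snoc v x)
  have := IsBoundedClosed.subst₂ hR (fun v : Fin (n + 2) → X =>
    (Fin.snoc ((v ∘ Fin.castSucc) ∘ Fin.castSucc) (v (Fin.last (n + 1))) : Fin (n + 1) → X))
      fun v => (v ∘ Fin.castSucc) (Fin.last n)
  have : Definable (Ex K) fun v => ∃ y, ∃ x, E x (f v) ∧ R (Fin.snoc v x) y := Ex.of_exists _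
  refine this.of_iff fun v => ?_
  simp only [hQR]
  tauto

/-- Collection bounds the witnesses of `∃ y`, which leaves a single quantifier in front. -/
theorem Ex.ball [ModelsMOSTColl E] [IsBoundedClosed E K] (hK : ∀ n, K n ⊆ Pi1 E n)
    (f : (Fin n → X) → X) [IsTerm f] (Q : (Fin n → X) → X → Prop)
    (hQ : Definable (Ex K) fun v : Fin (n + 1) → X => Q (v ∘ Fin.castSucc) (v (Fin.last n))) :
    Definable (Ex K) fun v => ∀ x, E x (f v) → Q v x := by
  obtain ⟨R, hR, h⟩ := definable_ex.1 hQ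
  have hQR (v : Fin n → X) (x : X) : Q v x ↔ ∃ y, R (Fin.snoc v x) y := by
    simpa [Fin.snoc_comp_castSucc] using h (Fin.snoc v x)
  have := IsBoundedClosed.subst₂ hR (fun v : Fin (n + 3) → X =>
    (Fin.snoc (((v ∘ Fin.castSucc) ∘ Fin.castSucc) ∘ Fin.castSucc)
      ((v ∘ Fin.castSucc) (Fin.last (n + 1))) : Fin (n + 1) → X)) fun v => v (Fin.last (n + 2))
  have : Definable (Ex K) fun v => ∃ c, ∀ x, E x (f v) → ∃ y, E y c ∧ R (Fin.snoc v x) y :=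
    Ex.of_exists _
  refine this.of_iff fun v => ?_
  simp only [hQR]
  refine ⟨fun hv => ?_, fun ⟨c, hc⟩ x hx => (hc x hx).imp fun _ => And.right⟩
  have := IsBoundedClosed.subst₂ hR (fun w : Fin 2 → X =>
    (Fin.snoc v (w 0) : Fin (n + 1) → X)) fun w => w 1
  have : Definable (Pi1 E) _ := ⟨hK _ this.mem⟩
  exact collection_pi1 (fun x y => R (Fin.snoc v x) y) hv

theorem Ex.isBoundedClosed [ModelsMOSTColl E] [IsBoundedClosed E K]
    (hK : ∀ n, K n ⊆ Pi1 E n) : IsBoundedClosed E (Ex K) where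
  of_delta0 P _ := have := IsBoundedClosed.of_delta0 (K := K) P; inferInstance
  subst := Ex.subst
  and P Q hP hQ := Ex.and hP hQ
  or P Q hP hQ := by
    obtain ⟨P', hP', h⟩ := definable_ex.1 hP
    obtain ⟨Q', hQ', h'⟩ := definable_ex.1 hQ
    exact definable_ex.2 ⟨fun v x => P' v x ∨ Q' v x, inferInstance,
      fun v => by rw [h, h', exists_or]⟩
  bex f Q _ hQ := Ex.bex f Q hQ
  ball f Q _ hQ := Ex.ball hK f Q hQ

theorem delta0_subset_pi1 [ModelsM E] (n : ℕ) : Delta0 E n ⊆ Pi1 E n := fun P hP =>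
  have : Definable (Delta0 E) P := ⟨hP⟩
  Definable.mem (K := Pi1 E)

instance Sigma1.isBoundedClosed [ModelsMOSTColl E] : IsBoundedClosed E (Sigma1 E) :=
  Ex.isBoundedClosed delta0_subset_pi1

instance Sigma2.isBoundedClosed [ModelsMOSTColl E] : IsBoundedClosed E (Sigma2 E) :=
  Ex.isBoundedClosed fun _ => subset_rfl

end Closure

/-! ### Set operations -/

section SetOperations

variable [ModelsM E] {a b x y z A B : X}

theorem ModelsM.exists_sUnion (a : X) : ∃ b, ∀ z, E z b ↔ ∃ y, E y a ∧ E z y :=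
  (ModelsM.modelM (E := E)).1.2.2.2.1 a

theorem ModelsM.exists_powerset (a : X) : ∃ p, ∀ z, E z p ↔ SubE E z a :=
  (ModelsM.modelM (E := E)).2 a

theorem ModelsM.foundation (hx : E x a) : ∃ y, E y a ∧ ∀ z, E z y → ¬ E z a :=
  (ModelsM.modelM (E := E)).1.2.2.2.2.2.2.2.2 a ⟨x, hx⟩

variable (E) in
/-- The unordered pair `{x, y}` of the model. -/
noncomputable def pair (x y : X) : X :=
  (ModelsM.exists_pair (E := E) x y).choose

theorem mem_pair : E z (pair E x y) ↔ z = x ∨ z = y :=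
  (ModelsM.exists_pair (E := E) x y).choose_spec z

variable (E) in
/-- The singleton `{x}` of the model. -/
noncomputable def singleton (x : X) : X :=
  pair E x x

theorem mem_singleton : E z (singleton E x) ↔ z = x := by
  rw [singleton, mem_pair (E := E), or_self]

variable (E) in
/-- The union `⋃ a` of the model. -/
noncomputable def sUnion (a : X) : X :=
  (ModelsM.exists_sUnion (E := E) a).choose

theorem mem_sUnion : E z (sUnion E a) ↔ ∃ y, E y a ∧ E z y :=
  (ModelsM.exists_sUnion (E := E) a).choose_spec z

variable (E) in
/-- The powerset `𝒫(a)` of the model. -/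
noncomputable def powerset (a : X) : X :=
  (ModelsM.exists_powerset (E := E) a).choose

theorem mem_powerset : E z (powerset E a) ↔ SubE E z a :=
  (ModelsM.exists_powerset (E := E) a).choose_spec z

variable (E) in
/-- The union `a ∪ b` of the model. -/
noncomputable def union (a b : X) : X :=
  sUnion E (pair E a b)

theorem mem_union : E z (union E a b) ↔ E z a ∨ E z b := by
  simp [union, mem_sUnion (E := E), mem_pair (E := E)]

variable (E) in
/-- The successor `a ∪ {a}` of the model. -/
noncomputable def succ (a : X) : X :=
  union E a (singleton E a)

theorem mem_succ : E z (succ E a) ↔ E z a ∨ z = a := by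
  rw [succ, mem_union (E := E), mem_singleton (E := E)]

theorem mem_irrefl : ¬ E x x := fun h => by
  obtain ⟨y, hy, hmin⟩ := ModelsM.foundation (E := E) (mem_singleton.2 (rfl : x = x))
  rw [mem_singleton (E := E)] at hy
  subst hy
  exact hmin y h (mem_singleton.2 rfl)

theorem mem_asymm (hxy : E x y) : ¬ E y x := fun hyx => by
  obtain ⟨z, hz, hmin⟩ := ModelsM.foundation (E := E) (mem_pair.2 (.inl rfl) : E x (pair E x y))
  rcases mem_pair.1 hz with rfl | rfl
  · exact hmin y hyx (mem_pair.2 (.inr rfl))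
  · exact hmin x hxy (mem_pair.2 (.inl rfl))

end SetOperations

/-! ### Ordered pairs and relations -/

section OrderedPairs

variable [ModelsM E] {a b x y x' y' z A B q : X}

theorem eq_pair_iff : a = pair E x y ↔ E x a ∧ E y a ∧ ∀ z, E z a → z = x ∨ z = y := by
  constructor
  · rintro rfl
    simp [mem_pair (E := E)]
  · rintro ⟨hx, hy, h⟩
    refine ModelsM.extensionality (E := E) fun z => ?_
    rw [mem_pair (E := E)]
    exact ⟨h z, by rintro (rfl | rfl) <;> assumption⟩

theorem pair_right_injective (h : pair E x y = pair E x y') : y = y' := by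
  have hy := eq_pair_iff.1 h
  have hy' := eq_pair_iff.1 h.symm
  simp only [mem_pair (E := E)] at hy hy'
  grind

variable (E) in
/-- The Kuratowski pair `(x, y) = {{x}, {x, y}}` of the model. -/
noncomputable def opair (x y : X) : X :=
  pair E (singleton E x) (pair E x y)

theorem opair_inj : opair E x y = opair E x' y' ↔ x = x' ∧ y = y' := by
  refine ⟨fun h => ?_, by rintro ⟨rfl, rfl⟩; rfl⟩
  have hx : x = x' := by
    rcases mem_pair.1 (eq_pair_iff.1 h).1 with hs | hs
    · exact mem_singleton.1 (hs ▸ mem_singleton.2 rfl : E x (singleton E x'))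
    · exact mem_singleton.1 (hs ▸ mem_pair.2 (.inl rfl) : E x (singleton E x'))
  subst hx
  exact ⟨rfl, pair_right_injective (pair_right_injective h)⟩

instance Delta0.eq_pair (f g k : (Fin n → X) → X) [IsTerm f] [IsTerm g] [IsTerm k] :
    Definable (Delta0 E) fun v => f v = pair E (g v) (k v) := by
  simp only [eq_pair_iff]
  infer_instance

instance Delta0.eq_opair (f g k : (Fin n → X) → X) [IsTerm f] [IsTerm g] [IsTerm k] :
    Definable (Delta0 E) fun v => f v = opair E (g v) (k v) := by
  have (q x y : X) : q = opair E x y ↔ (∃ s, E s q ∧ s = pair E x x) ∧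
      (∃ d, E d q ∧ d = pair E x y) ∧ ∀ z, E z q → z = pair E x x ∨ z = pair E x y := by
    simp only [opair, singleton, exists_eq_right]
    exact eq_pair_iff
  simp only [this]
  infer_instance

instance Delta0.opair_mem (f g k : (Fin n → X) → X) [IsTerm f] [IsTerm g] [IsTerm k] :
    Definable (Delta0 E) fun v => E (opair E (g v) (k v)) (f v) :=
  .congr (fun v => ∃ q, E q (f v) ∧ q = opair E (g v) (k v)) fun v => by simp

variable (E) in
theorem exists_prod (A B : X) :
    ∃ c, ∀ q, E q c ↔ ∃ a, E a A ∧ ∃ b, E b B ∧ q = opair E a b := by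
  obtain ⟨c, hc⟩ := separation (Delta0 E) (fun q => ∃ a, E a A ∧ ∃ b, E b B ∧ q = opair E a b)
    (powerset E (powerset E (union E A B)))
  refine ⟨c, fun q => (hc q).trans (and_iff_right_of_imp ?_)⟩
  rintro ⟨a, ha, b, hb, rfl⟩
  refine mem_powerset.2 fun s hs => mem_powerset.2 fun y hy => mem_union.2 ?_
  rcases mem_pair.1 hs with rfl | rfl <;> rcases mem_pair.1 hy with rfl | rfl <;> simp [ha, hb]

variable (E) in
/-- The product `A × B` of the model. -/
noncomputable def prod (A B : X) : X :=
  (exists_prod E A B).choose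

theorem mem_prod : E q (prod E A B) ↔ ∃ a, E a A ∧ ∃ b, E b B ∧ q = opair E a b :=
  (exists_prod E A B).choose_spec q

theorem opair_mem_prod : E (opair E a b) (prod E A B) ↔ E a A ∧ E b B := by
  rw [mem_prod (E := E)]
  simp only [opair_inj (E := E)]
  grind

theorem exists_rel (K : PredClass X) [IsBoundedClosed E K] [HasSeparation E K] (Q : X → X → Prop)
    [hQ : Definable K fun v : Fin 2 → X => Q (v 0) (v 1)] (A B : X) :
    ∃ R, SubE E R (prod E A B) ∧ ∀ a b, E (opair E a b) R ↔ E a A ∧ E b B ∧ Q a b := by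
  have := Definable.of₂ hQ (fun v : Fin 3 → X => (v ∘ Fin.castSucc) (Fin.last 1))
    fun v => v (Fin.last 2)
  obtain ⟨R, hR⟩ := separation K
    (fun q => ∃ a, E a A ∧ ∃ b, E b B ∧ q = opair E a b ∧ Q a b) (prod E A B)
  refine ⟨R, fun q hq => ((hR q).1 hq).1, fun a b => ?_⟩
  rw [hR, opair_mem_prod (E := E)]
  simp only [opair_inj (E := E)]
  grind

end OrderedPairs

/-! ### Foundation for sets and induction -/

section Induction

variable [ModelsM E]

theorem exists_minimal (K : PredClass X) [HasSeparation E K] (P : X → Prop)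
    [Definable K fun v : Fin 1 → X => P (v 0)] {w : X} (hw : ∃ x, E x w ∧ P x) :
    ∃ x, E x w ∧ P x ∧ ∀ y, E y x → E y w → ¬ P y := by
  obtain ⟨s, hs⟩ := separation K P w
  obtain ⟨x, hx⟩ := hw
  obtain ⟨y, hy, hmin⟩ := ModelsM.foundation ((hs x).2 hx)
  exact ⟨y, ((hs y).1 hy).1, ((hs y).1 hy).2, fun z hzy hzw hz => hmin z hzy ((hs z).2 ⟨hzw, hz⟩)⟩

theorem TransSet.induction {w : X} (hw : TransSet E w) (P : X → Prop)
    [Definable (Delta0 E) fun v : Fin 1 → X => P (v 0)]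
    (step : ∀ x, E x w → (∀ y, E y x → P y) → P x) : ∀ x, E x w → P x := by
  by_contra! h
  obtain ⟨x, hx, hPx, hmin⟩ := exists_minimal (Delta0 E) (fun x => ¬ P x) h
  exact hPx (step x hx fun y hy => not_not.1 (hmin y hy (hw x hx y hy)))

end Induction

/-! ### Collection and replacement for `Σ₂` relations -/

section Collection

variable [ModelsMOSTColl E] {w : X}

theorem collection_pi1₂ (Q : X → X → X → Prop)
    [hQ : Definable (Pi1 E) fun v : Fin 3 → X => Q (v 0) (v 1) (v 2)]
    (hw : ∀ x, E x w → ∃ y z, Q x y z) :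
    ∃ c, ∀ x, E x w → ∃ y, E y c ∧ ∃ z, E z c ∧ Q x y z := by
  have := Definable.of₃ hQ (fun v : Fin 4 → X => ((v ∘ Fin.castSucc) ∘ Fin.castSucc) 0)
    (fun v => (v ∘ Fin.castSucc) (Fin.last 2)) fun v => v (Fin.last 3)
  have : Definable (Pi1 E) fun v : Fin 2 → X =>
      ∃ y, E y (v 1) ∧ ∃ z, E z (v 1) ∧ Q (v 0) y z := inferInstance
  obtain ⟨c, hc⟩ := collection_pi1 (fun x e => ∃ y, E y e ∧ ∃ z, E z e ∧ Q x y z) fun x hx => by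
    obtain ⟨y, z, h⟩ := hw x hx
    exact ⟨pair E y z, y, mem_pair.2 (.inl rfl), z, mem_pair.2 (.inr rfl), h⟩
  refine ⟨sUnion E c, fun x hx => ?_⟩
  obtain ⟨e, he, y, hy, z, hz, h⟩ := hc x hx
  exact ⟨y, mem_sUnion.2 ⟨e, he, hy⟩, z, mem_sUnion.2 ⟨e, he, hz⟩, h⟩

theorem exists_pi1_matrix {R : X → X → Prop}
    (hR : Definable (Sigma2 E) fun v : Fin 2 → X => R (v 0) (v 1)) :
    ∃ Q : X → X → X → Prop, Definable (Pi1 E) (fun v : Fin 3 → X => Q (v 0) (v 1) (v 2)) ∧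
      ∀ x y, R x y ↔ ∃ z, Q x y z := by
  obtain ⟨Q, hQ, hRQ⟩ := definable_ex.1 hR
  exact ⟨fun x y => Q ![x, y], IsBoundedClosed.subst₂ hQ (fun v => ![v 0, v 1]) fun v => v 2,
    fun x y => hRQ ![x, y]⟩

theorem collection_sigma2 (R : X → X → Prop)
    [hR : Definable (Sigma2 E) fun v : Fin 2 → X => R (v 0) (v 1)]
    (hw : ∀ x, E x w → ∃ y, R x y) : ∃ c, ∀ x, E x w → ∃ y, E y c ∧ R x y := by
  obtain ⟨Q, hQ, hRQ⟩ := exists_pi1_matrix hR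
  simp only [hRQ] at hw ⊢
  obtain ⟨c, hc⟩ := collection_pi1₂ Q hw
  exact ⟨c, fun x hx => (hc x hx).imp fun y hy => ⟨hy.1, hy.2.imp fun z => And.right⟩⟩

theorem replacement_sigma2 (R : X → X → Prop)
    [hR : Definable (Sigma2 E) fun v : Fin 2 → X => R (v 0) (v 1)]
    (hw : ∀ x, E x w → ∃! y, R x y) : ∃ r, ∀ y, E y r ↔ ∃ x, E x w ∧ R x y := by
  obtain ⟨Q, hQ, hRQ⟩ := exists_pi1_matrix hR
  obtain ⟨c, hc⟩ := collection_pi1₂ Q fun x hx => by simpa only [hRQ] using (hw x hx).exists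
  have := Definable.of₃ hQ (fun v : Fin 3 → X => (v ∘ Fin.castSucc) (Fin.last 1))
    (fun v => ((v ∘ Fin.castSucc) ∘ Fin.castSucc) 0) fun v => v (Fin.last 2)
  have : Definable (Pi1 E) fun v : Fin 1 → X =>
    ∃ x, E x w ∧ ∃ z, E z c ∧ Q x (v 0) z := inferInstance
  obtain ⟨r, hr⟩ := separation (Pi1 E) (fun y => ∃ x, E x w ∧ ∃ z, E z c ∧ Q x y z) c
  refine ⟨r, fun y => (hr y).trans ⟨?_, ?_⟩⟩
  · rintro ⟨-, x, hx, z, -, h⟩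
    exact ⟨x, hx, (hRQ x y).2 ⟨z, h⟩⟩
  · rintro ⟨x, hx, h⟩
    obtain ⟨y', hy', z, hz, h'⟩ := hc x hx
    obtain rfl : y' = y := (hw x hx).unique ((hRQ x y').2 ⟨z, h'⟩) h
    exact ⟨hy', x, hx, z, hz, h'⟩

end Collection

/-! ### `Δ₀` notions -/

section Definability

variable (f g : (Fin n → X) → X) [IsTerm f] [IsTerm g]

instance Delta0.subE : Definable (Delta0 E) fun v => SubE E (f v) (g v) := by
  unfold SubE
  infer_instance

instance Delta0.transSet : Definable (Delta0 E) fun v => TransSet E (f v) := by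
  unfold TransSet
  infer_instance

instance Delta0.isOrdinal : Definable (Delta0 E) fun v => IsOrdinal E (f v) := by
  unfold IsOrdinal
  infer_instance

end Definability

/-! ### The sets `H(s)` -/

section H

variable {s s' T T' i i' d R y : X}

variable (E) in
/-- The binary relation `i` of the model relates every element of `T` to an element of `s`, and
no two elements of `T` to the same one. It need not be single-valued. -/
def Embeds [ModelsM E] (T s i : X) : Prop :=
  (∀ x, E x T → ∃ a, E a s ∧ E (opair E x a) i) ∧
  ∀ x, E x T → ∀ x', E x' T → ∀ a, E a s → E (opair E x a) i → E (opair E x' a) i → x = x'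

variable (E) in
/-- The predicate defining `H(s)`: some transitive set containing `y` embeds in `s`. -/
def InH [ModelsM E] (s y : X) : Prop :=
  ∃ T i, TransSet E T ∧ E y T ∧ Embeds E T s i

variable (E) in
/-- The embedding `i` of the transitive set `T` in `s` has range `d` and carries membership on `T`
to the relation `R`. -/
def Codes [ModelsM E] (s d R T i : X) : Prop :=
  TransSet E T ∧ Embeds E T s i ∧
  (∀ a, E a s → (E a d ↔ ∃ x, E x T ∧ E (opair E x a) i)) ∧
  ∀ a, E a s → ∀ b, E b s → (E (opair E a b) R ↔
    ∃ x, E x T ∧ ∃ y, E y T ∧ E (opair E x a) i ∧ E (opair E y b) i ∧ E x y)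

section Definability

variable [ModelsM E] (f g k l o : (Fin n → X) → X) [IsTerm f] [IsTerm g] [IsTerm k] [IsTerm l]
  [IsTerm o]

instance Delta0.embeds : Definable (Delta0 E) fun v => Embeds E (f v) (g v) (k v) := by
  unfold Embeds
  infer_instance

instance Delta0.codes :
    Definable (Delta0 E) fun v => Codes E (f v) (g v) (k v) (l v) (o v) := by
  unfold Codes
  infer_instance

instance Sigma1.inH : Definable (Sigma1 E) fun v => InH E (f v) (g v) := by
  unfold InH
  infer_instance

end Definability

theorem exists_codes [ModelsM E] (hT : TransSet E T) (hi : Embeds E T s i) :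
    ∃ d R, SubE E d s ∧ SubE E R (prod E s s) ∧ Codes E s d R T i := by
  obtain ⟨d, hd⟩ := separation (Delta0 E) (fun a => ∃ x, E x T ∧ E (opair E x a) i) s
  obtain ⟨R, hRs, hR⟩ := exists_rel (Delta0 E) (fun a b => ∃ x, E x T ∧ ∃ y, E y T ∧
    E (opair E x a) i ∧ E (opair E y b) i ∧ E x y) s s
  exact ⟨d, R, fun a ha => ((hd a).1 ha).1, hRs, hT, hi,
    fun a ha => (hd a).trans (and_iff_right ha),
    fun a ha b hb => (hR a b).trans <| (and_iff_right ha).trans <| and_iff_right hb⟩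

/-- A code determines each element from its elements, by induction along `T`. -/
theorem Codes.eq_of_opair_mem [ModelsM E] (h : Codes E s d R T i) (h' : Codes E s d R T' i') :
    ∀ x, E x T → ∀ x', E x' T' → ∀ a, E a s → E (opair E x a) i → E (opair E x' a) i' →
      x = x' := by
  obtain ⟨hT, hi, -, hR⟩ := h
  obtain ⟨hT', hi', -, hR'⟩ := h'
  refine TransSet.induction hT (fun x => ∀ x', E x' T' → ∀ a, E a s → E (opair E x a) i →
    E (opair E x' a) i' → x = x') fun x hx ih x' hx' a ha hxa hxa' =>
    ModelsM.extensionality (E := E) fun z => ⟨fun hz => ?_, fun hz => ?_⟩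
  · obtain ⟨b, hb, hzb⟩ := hi.1 z (hT x hx z hz)
    obtain ⟨z', hz', y, hy, hzb', hya, hzy⟩ := (hR' b hb a ha).1
      ((hR b hb a ha).2 ⟨z, hT x hx z hz, x, hx, hzb, hxa, hz⟩)
    obtain rfl : y = x' := hi'.2 y hy x' hx' a ha hya hxa'
    rwa [ih z hz z' hz' b hb hzb hzb']
  · obtain ⟨b, hb, hzb⟩ := hi'.1 z (hT' x' hx' z hz)
    obtain ⟨z', -, y, hy, hzb', hya, hzy⟩ := (hR b hb a ha).1
      ((hR' b hb a ha).2 ⟨z, hT' x' hx' z hz, x', hx', hzb, hxa', hz⟩)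
    obtain rfl : y = x := hi.2 y hy x hx a ha hya hxa
    rwa [← ih z' hzy z (hT' x' hx' z hz) b hb hzb' hzb]

theorem Codes.subE [ModelsM E] (h : Codes E s d R T i) (h' : Codes E s d R T' i') :
    SubE E T T' := by
  intro x hx
  obtain ⟨a, ha, hxa⟩ := h.2.1.1 x hx
  obtain ⟨x', hx', hxa'⟩ := (h'.2.2.1 a ha).1 ((h.2.2.1 a ha).2 ⟨x, hx, hxa⟩)
  rwa [h.eq_of_opair_mem h' x hx x' hx' a ha hxa hxa']

/-- Codes are subsets of `s` and `s × s`, so by `Σ₁`-Separation and Collection some set contains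
a decoding of each of them. -/
theorem exists_H [ModelsMOSTColl E] (s : X) : ∃ h, ∀ y, E y h ↔ InH E s y := by
  obtain ⟨Q, hQ⟩ := separation (Sigma1 E)
    (fun q => ∃ T d R i, q = opair E d R ∧ Codes E s d R T i)
    (prod E (powerset E s) (powerset E (prod E s s)))
  obtain ⟨c, hc⟩ := collection_sigma2 (fun q T => ∃ d R i, q = opair E d R ∧ Codes E s d R T i)
    fun q hq => ((hQ q).1 hq).2
  obtain ⟨h, hh⟩ := separation (Sigma1 E) (fun y => InH E s y) (sUnion E c)
  refine ⟨h, fun y => (hh y).trans (and_iff_right_of_imp ?_)⟩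
  rintro ⟨T, i, hT, hy, hi⟩
  obtain ⟨d, R, hd, hR, hcodes⟩ := exists_codes hT hi
  obtain ⟨T', hT', d', R', i', hq, hcodes'⟩ := hc (opair E d R) <| (hQ _).2
    ⟨opair_mem_prod.2 ⟨mem_powerset.2 hd, mem_powerset.2 hR⟩, T, d, R, i, rfl, hcodes⟩
  obtain ⟨rfl, rfl⟩ := opair_inj.1 hq
  exact mem_sUnion.2 ⟨T', hT', hcodes.subE hcodes' y hy⟩

variable (E) in
/-- The set `H(s)`. -/
noncomputable def H [ModelsMOSTColl E] (s : X) : X :=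
  (exists_H (E := E) s).choose

theorem mem_H [ModelsMOSTColl E] : E y (H E s) ↔ InH E s y :=
  (exists_H (E := E) s).choose_spec y

theorem InH.mono [ModelsM E] (hs : SubE E s s') (h : InH E s y) : InH E s' y := by
  obtain ⟨T, i, hT, hy, hi⟩ := h
  obtain ⟨j, -, hj⟩ := exists_rel (Delta0 E) (fun x a => E (opair E x a) i) T s
  refine ⟨T, j, hT, hy, fun x hx => ?_, fun x hx x' hx' a _ hxa hxa' => ?_⟩
  · obtain ⟨a, ha, hxa⟩ := hi.1 x hx
    exact ⟨a, hs a ha, (hj _ _).2 ⟨hx, ha, hxa⟩⟩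
  · rw [hj] at hxa hxa'
    exact hi.2 x hx x' hx' a hxa.2.1 hxa.2.2 hxa'.2.2

end H

/-! ### Ordinals -/

section Ordinals

variable {a b x y : X}

theorem IsOrdinal.mem (ha : IsOrdinal E a) (hb : E b a) : IsOrdinal E b :=
  ⟨ha.2 b hb, fun y hy => ha.2 y (ha.1 b hb y hy)⟩

variable [ModelsM E]

theorem IsOrdinal.succ (ha : IsOrdinal E a) : IsOrdinal E (succ E a) := by
  refine ⟨fun y hy z hz => mem_succ.2 (.inl ?_), fun y hy => ?_⟩ <;>
    rcases mem_succ.1 hy with hy | rfl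
  exacts [ha.1 y hy z hz, hz, ha.2 y hy, ha.1]

theorem IsOrdinal.trichotomy_of_mem (ha : IsOrdinal E a) (hb : IsOrdinal E b) :
    ∀ x, E x a → ∀ y, E y b → E x y ∨ x = y ∨ E y x := by
  refine TransSet.induction ha.1 (fun x => ∀ y, E y b → E x y ∨ x = y ∨ E y x) fun x hx ihx => ?_
  refine TransSet.induction hb.1 (fun y => E x y ∨ x = y ∨ E y x) fun y hy ihy => ?_
  by_contra! ⟨hxy, hne, hyx⟩
  refine hne (ModelsM.extensionality (E := E) fun z => ⟨fun hz => ?_, fun hz => ?_⟩)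
  · rcases ihx z hz y hy with h | rfl | h
    exacts [h, absurd hz hyx, absurd (ha.2 x hx z hz y h) hyx]
  · rcases ihy z hz with h | rfl | h
    exacts [absurd (hb.2 y hy z hz x h) hxy, absurd hz hxy, h]

theorem IsOrdinal.trichotomy (ha : IsOrdinal E a) (hb : IsOrdinal E b) :
    E a b ∨ a = b ∨ E b a :=
  IsOrdinal.trichotomy_of_mem (IsOrdinal.succ ha) (IsOrdinal.succ hb) a (mem_succ.2 (.inr rfl)) b
    (mem_succ.2 (.inr rfl))

end Ordinals

/-! ### Choice functions -/

section Choice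

variable [ModelsM E] {t A B q : X}

variable (E) in
/-- The copy `{A} × A` of `A`. Distinct sets have disjoint copies. -/
noncomputable def tagged (A : X) : X :=
  prod E (singleton E A) A

theorem mem_tagged : E q (tagged E A) ↔ ∃ a, E a A ∧ q = opair E A a := by
  simp [tagged, mem_prod (E := E), mem_singleton (E := E)]

instance Delta0.eq_tagged (f g : (Fin n → X) → X) [IsTerm f] [IsTerm g] :
    Definable (Delta0 E) fun v => f v = tagged E (g v) := by
  have (z A : X) : z = tagged E A ↔
      (∀ q, E q z → ∃ a, E a A ∧ q = opair E A a) ∧ ∀ a, E a A → E (opair E A a) z := by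
    refine ⟨?_, fun ⟨h, h'⟩ => ModelsM.extensionality (E := E) fun q => ?_⟩
    · rintro rfl
      simp [mem_tagged (E := E), opair_inj (E := E)]
    · rw [mem_tagged (E := E)]
      exact ⟨h q, by rintro ⟨a, ha, rfl⟩; exact h' a ha⟩
  simp only [this]
  infer_instance

variable (E) in
/-- The relation `c` of the model selects one element of every nonempty subset of `t`. -/
def IsChoice (t c : X) : Prop :=
  ∀ A, SubE E A t → (∃ a, E a A) → ∃! a, E a A ∧ E (opair E A a) c

end Choice

theorem exists_isChoice [ModelsMOSTColl E] (t : X) : ∃ c, IsChoice E t c := by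
  obtain ⟨S, hS⟩ := separation (Delta0 E)
    (fun z => ∃ A, E A (powerset E t) ∧ ∃ a, E a A ∧ z = tagged E A)
    (powerset E (prod E (powerset E t) t))
  obtain ⟨c, hc⟩ := ModelsMOSTColl.choice S
    (fun z hz => by
      obtain ⟨-, A, -, a, ha, rfl⟩ := (hS z).1 hz
      exact ⟨_, mem_tagged.2 ⟨a, ha, rfl⟩⟩)
    (fun x y hx hy hxy z hzx hzy => by
      obtain ⟨-, A, -, -, -, rfl⟩ := (hS x).1 hx
      obtain ⟨-, B, -, -, -, rfl⟩ := (hS y).1 hy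
      obtain ⟨a, -, rfl⟩ := mem_tagged.1 hzx
      obtain ⟨b, -, h⟩ := mem_tagged.1 hzy
      exact hxy (by rw [(opair_inj.1 h).1]))
  refine ⟨c, fun A hA ⟨a, ha⟩ => ?_⟩
  have hAS : E (tagged E A) S := by
    refine (hS _).2 ⟨mem_powerset.2 fun q hq => ?_, A, mem_powerset.2 hA, a, ha, rfl⟩
    obtain ⟨b, hb, rfl⟩ := mem_tagged.1 hq
    exact opair_mem_prod.2 ⟨mem_powerset.2 hA, hA b hb⟩
  obtain ⟨q, ⟨hqc, hqA⟩, hq⟩ := hc _ hAS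
  obtain ⟨b, hb, rfl⟩ := mem_tagged.1 hqA
  exact ⟨b, ⟨hb, hqc⟩, fun b' ⟨hb', hbc'⟩ =>
    (opair_inj.1 (hq _ ⟨hbc', mem_tagged.2 ⟨b', hb', rfl⟩⟩)).2⟩

/-! ### Enumerating a set by ordinals -/

section Attempts

variable [ModelsM E] {t c F F' α α' β γ A A' a x z : X}

variable (E) in
/-- `A` consists of the elements of `t` to which `F` relates no element of `β`. -/
def IsRest (t F β A : X) : Prop :=
  SubE E A t ∧ ∀ z, E z t → (E z A ↔ ¬ ∃ γ, E γ β ∧ E (opair E γ z) F)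

theorem IsRest.congr (h : IsRest E t F β A)
    (hF : ∀ γ, E γ β → ∀ z, E z t → (E (opair E γ z) F ↔ E (opair E γ z) F')) :
    IsRest E t F' β A :=
  ⟨h.1, fun z hz => (h.2 z hz).trans <| not_congr <| exists_congr fun γ =>
    and_congr_right fun hγ => hF γ hγ z hz⟩

theorem IsRest.unique (h : IsRest E t F β A) (h' : IsRest E t F β A') : A = A' := by
  refine ModelsM.extensionality (E := E) fun z => ⟨fun hz => ?_, fun hz => ?_⟩
  · exact (h'.2 z (h.1 z hz)).2 ((h.2 z (h.1 z hz)).1 hz)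
  · exact (h.2 z (h'.1 z hz)).2 ((h'.2 z (h'.1 z hz)).1 hz)

variable (E) in
/-- `F` is a function from the ordinal `α` to `t` defined by recursion: its value at `β` is the
element which `c` selects among those elements of `t` that are not values at members of `β`. -/
structure IsAttempt (t c F α : X) : Prop where
  isOrdinal : IsOrdinal E α
  exists_eq_opair : ∀ q, E q F → ∃ β, E β α ∧ ∃ x, E x t ∧ q = opair E β x
  total : ∀ β, E β α → ∃ x, E x t ∧ E (opair E β x) F
  exists_isRest : ∀ β, E β α → ∀ x, E x t → E (opair E β x) F →
    ∃ A, E A (powerset E t) ∧ IsRest E t F β A ∧ E x A ∧ E (opair E A x) c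

instance Delta0.isAttempt (f g : (Fin n → X) → X) [IsTerm f] [IsTerm g] :
    Definable (Delta0 E) fun v => IsAttempt E t c (f v) (g v) := by
  have (F α : X) : IsAttempt E t c F α ↔ IsOrdinal E α ∧
      (∀ q, E q F → ∃ β, E β α ∧ ∃ x, E x t ∧ q = opair E β x) ∧
      (∀ β, E β α → ∃ x, E x t ∧ E (opair E β x) F) ∧
      ∀ β, E β α → ∀ x, E x t → E (opair E β x) F →
        ∃ A, E A (powerset E t) ∧ IsRest E t F β A ∧ E x A ∧ E (opair E A x) c :=
    ⟨fun ⟨h₁, h₂, h₃, h₄⟩ => ⟨h₁, h₂, h₃, h₄⟩, fun ⟨h₁, h₂, h₃, h₄⟩ => ⟨h₁, h₂, h₃, h₄⟩⟩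
  simp only [this, IsRest]
  infer_instance

namespace IsAttempt

theorem mem_of_opair_mem (h : IsAttempt E t c F α) (hF : E (opair E β x) F) : E β α ∧ E x t := by
  obtain ⟨β', hβ, x', hx, hq⟩ := h.exists_eq_opair _ hF
  obtain ⟨rfl, rfl⟩ := opair_inj.1 hq
  exact ⟨hβ, hx⟩

theorem opair_mem_iff_of_eq (h : IsAttempt E t c F α) (h' : IsAttempt E t c F' α') (hγ : E γ α)
    (hγ' : E γ α') (heq : ∀ x, E x t → ∀ x', E x' t → E (opair E γ x) F → E (opair E γ x') F' →
      x = x') (hz : E z t) : E (opair E γ z) F ↔ E (opair E γ z) F' := by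
  refine ⟨fun hF => ?_, fun hF => ?_⟩
  · obtain ⟨x, hx, hxF⟩ := h'.total γ hγ'
    rwa [heq z hz x hx hF hxF]
  · obtain ⟨x, hx, hxF⟩ := h.total γ hγ
    rwa [← heq x hx z hz hxF hF]

theorem eq_of_opair_mem (hc : IsChoice E t c) (h : IsAttempt E t c F α)
    (h' : IsAttempt E t c F' α') : ∀ β, E β α → E β α' → ∀ x, E x t → ∀ x', E x' t →
      E (opair E β x) F → E (opair E β x') F' → x = x' := by
  refine TransSet.induction h.isOrdinal.1 (fun β => E β α' → ∀ x, E x t → ∀ x', E x' t →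
    E (opair E β x) F → E (opair E β x') F' → x = x') fun β hβ ih hβ' x hx x' hx' hF hF' => ?_
  obtain ⟨A, -, hA, hxA, hxc⟩ := h.exists_isRest β hβ x hx hF
  obtain ⟨A', -, hA', hxA', hxc'⟩ := h'.exists_isRest β hβ' x' hx' hF'
  have hrest : IsRest E t F' β A := hA.congr fun γ hγ z hz => by
    have hγ' := h'.isOrdinal.1 β hβ' γ hγ
    exact h.opair_mem_iff_of_eq h' (h.isOrdinal.1 β hβ γ hγ) hγ' (ih γ hγ hγ') hz
  obtain rfl := hrest.unique hA'
  exact (hc A hA.1 ⟨x, hxA⟩).unique ⟨hxA, hxc⟩ ⟨hxA', hxc'⟩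

theorem not_mem_of_opair_mem (h : IsAttempt E t c F α) (hF : E (opair E β x) F)
    (hF' : E (opair E γ x) F) : ¬ E β γ := fun hβγ => by
  obtain ⟨hγ, hx⟩ := h.mem_of_opair_mem hF'
  obtain ⟨A, -, hA, hxA, -⟩ := h.exists_isRest γ hγ x hx hF'
  exact (hA.2 x hx).1 hxA ⟨β, hβγ, hF⟩

theorem embeds (h : IsAttempt E t c F α) : Embeds E α t F := by
  refine ⟨h.total, fun β hβ γ hγ a _ hβF hγF => ?_⟩
  rcases IsOrdinal.trichotomy (IsOrdinal.mem h.isOrdinal hβ) (IsOrdinal.mem h.isOrdinal hγ)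
    with hβγ | hβγ | hγβ
  exacts [absurd hβγ (h.not_mem_of_opair_mem hβF hγF), hβγ,
    absurd hγβ (h.not_mem_of_opair_mem hγF hβF)]

theorem insert (h : IsAttempt E t c F α) (hA : IsRest E t F α A) (ha : E a A)
    (hac : E (opair E A a) c) :
    IsAttempt E t c (union E F (singleton E (opair E α a))) (succ E α) := by
  have mem_iff (γ z : X) : E (opair E γ z) (union E F (singleton E (opair E α a))) ↔
      E (opair E γ z) F ∨ γ = α ∧ z = a := by
    rw [mem_union (E := E), mem_singleton (E := E), opair_inj (E := E)]
  have rest {β B : X} (hβ : ¬ E α β) (hB : IsRest E t F β B) :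
      IsRest E t (union E F (singleton E (opair E α a))) β B :=
    hB.congr fun γ hγ z _ => by
      rw [mem_iff, or_iff_left]
      rintro ⟨rfl, -⟩
      exact hβ hγ
  refine ⟨IsOrdinal.succ h.isOrdinal, fun q hq => ?_, fun β hβ => ?_, fun β _ x hx hF => ?_⟩
  · rcases mem_union.1 hq with hq | hq
    · obtain ⟨β, hβ, hx⟩ := h.exists_eq_opair q hq
      exact ⟨β, mem_succ.2 (.inl hβ), hx⟩
    · exact ⟨α, mem_succ.2 (.inr rfl), a, hA.1 a ha, mem_singleton.1 hq⟩
  · rcases mem_succ.1 hβ with hβ | rfl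
    · obtain ⟨x, hx, hF⟩ := h.total β hβ
      exact ⟨x, hx, (mem_iff β x).2 (.inl hF)⟩
    · exact ⟨a, hA.1 a ha, (mem_iff β a).2 (.inr ⟨rfl, rfl⟩)⟩
  · rcases (mem_iff β x).1 hF with hF | ⟨rfl, rfl⟩
    · have hβ := (h.mem_of_opair_mem hF).1
      obtain ⟨B, hBt, hB, hxB⟩ := h.exists_isRest β hβ x hx hF
      exact ⟨B, hBt, rest (mem_asymm hβ) hB, hxB⟩
    · exact ⟨A, mem_powerset.2 hA.1, rest mem_irrefl hA, ha, hac⟩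

theorem of_union (hc : IsChoice E t c)
    (hF : ∀ q, E q F ↔ ∃ F' α', IsAttempt E t c F' α' ∧ E q F')
    (hα : ∀ β, E β α ↔ ∃ F' α', IsAttempt E t c F' α' ∧ E β α') : IsAttempt E t c F α := by
  refine ⟨⟨fun y hy z hz => ?_, fun y hy => ?_⟩, fun q hq => ?_, fun β hβ => ?_,
    fun β _ x hx hβF => ?_⟩
  · obtain ⟨F', α', h, hy⟩ := (hα y).1 hy
    exact (hα z).2 ⟨F', α', h, h.isOrdinal.1 y hy z hz⟩
  · obtain ⟨F', α', h, hy⟩ := (hα y).1 hy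
    exact h.isOrdinal.2 y hy
  · obtain ⟨F', α', h, hq⟩ := (hF q).1 hq
    obtain ⟨β, hβ, hx⟩ := h.exists_eq_opair q hq
    exact ⟨β, (hα β).2 ⟨F', α', h, hβ⟩, hx⟩
  · obtain ⟨F', α', h, hβ⟩ := (hα β).1 hβ
    obtain ⟨x, hx, hβF⟩ := h.total β hβ
    exact ⟨x, hx, (hF _).2 ⟨F', α', h, hβF⟩⟩
  · obtain ⟨F', α', h, hβF⟩ := (hF _).1 hβF
    have hβ := (h.mem_of_opair_mem hβF).1
    obtain ⟨A, hAt, hA, hxA⟩ := h.exists_isRest β hβ x hx hβF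
    refine ⟨A, hAt, hA.congr fun γ hγ z hz => ⟨fun hγF => (hF _).2 ⟨F', α', h, hγF⟩,
      fun hγF => ?_⟩, hxA⟩
    obtain ⟨F'', α'', h'', hγF⟩ := (hF _).1 hγF
    have hγ' := h.isOrdinal.1 β hβ γ hγ
    have hγ'' := (h''.mem_of_opair_mem hγF).1
    exact (h.opair_mem_iff_of_eq h'' hγ' hγ'' (eq_of_opair_mem hc h h'' γ hγ' hγ'') hz).2 hγF

end IsAttempt

end Attempts

section Enumeration

variable [ModelsMOSTColl E] {t c F α : X}

theorem IsAttempt.subE_H (h : IsAttempt E t c F α) : SubE E α (H E t) := fun _ hβ =>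
  mem_H.2 ⟨α, F, h.isOrdinal.1, hβ, h.embeds⟩

theorem IsAttempt.subE_prod (h : IsAttempt E t c F α) : SubE E F (prod E (H E t) t) := by
  intro q hq
  obtain ⟨β, hβ, x, hx, rfl⟩ := h.exists_eq_opair q hq
  exact opair_mem_prod.2 ⟨h.subE_H β hβ, hx⟩

/-- All attempts are bounded by the set `H(t)`, so their union is an attempt. -/
theorem exists_greatest_isAttempt (hc : IsChoice E t c) :
    ∃ F α, IsAttempt E t c F α ∧ ∀ F' α', IsAttempt E t c F' α' → SubE E α' α := by
  obtain ⟨S, hS⟩ := separation (Delta0 E)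
    (fun F => ∃ α, E α (powerset E (H E t)) ∧ IsAttempt E t c F α)
    (powerset E (prod E (H E t) t))
  obtain ⟨O, hO⟩ := separation (Delta0 E)
    (fun α => ∃ F, E F (powerset E (prod E (H E t) t)) ∧ IsAttempt E t c F α)
    (powerset E (H E t))
  have hα (β : X) : E β (sUnion E O) ↔ ∃ F' α', IsAttempt E t c F' α' ∧ E β α' := by
    rw [mem_sUnion (E := E)]
    refine ⟨fun ⟨α', hα', hβ⟩ => ?_, fun ⟨F', α', h, hβ⟩ => ⟨α', (hO α').2
      ⟨mem_powerset.2 h.subE_H, F', mem_powerset.2 h.subE_prod, h⟩, hβ⟩⟩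
    obtain ⟨-, F', -, h⟩ := (hO α').1 hα'
    exact ⟨F', α', h, hβ⟩
  have hF (q : X) : E q (sUnion E S) ↔ ∃ F' α', IsAttempt E t c F' α' ∧ E q F' := by
    rw [mem_sUnion (E := E)]
    refine ⟨fun ⟨F', hF', hq⟩ => ?_, fun ⟨F', α', h, hq⟩ => ⟨F', (hS F').2
      ⟨mem_powerset.2 h.subE_prod, α', mem_powerset.2 h.subE_H, h⟩, hq⟩⟩
    obtain ⟨-, α', -, h⟩ := (hS F').1 hF'
    exact ⟨F', α', h, hq⟩
  exact ⟨sUnion E S, sUnion E O, .of_union hc hF hα,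
    fun F' α' h β hβ => (hα β).2 ⟨F', α', h, hβ⟩⟩

theorem exists_surjective_isAttempt (hc : IsChoice E t c) :
    ∃ F α, IsAttempt E t c F α ∧ ∀ z, E z t → ∃ β, E β α ∧ E (opair E β z) F := by
  obtain ⟨F, α, h, hmax⟩ := exists_greatest_isAttempt hc
  refine ⟨F, α, h, ?_⟩
  by_contra! ⟨z, hz, hzF⟩
  obtain ⟨A, hA⟩ := separation (Delta0 E) (fun z => ¬ ∃ γ, E γ α ∧ E (opair E γ z) F) t
  have hrest : IsRest E t F α A :=
    ⟨fun z hz => ((hA z).1 hz).1, fun z hz => (hA z).trans (and_iff_right hz)⟩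
  obtain ⟨a, ⟨ha, hac⟩, -⟩ := hc A hrest.1 ⟨z, (hrest.2 z hz).2 (by simpa using hzF)⟩
  exact mem_irrefl (hmax _ _ (h.insert hrest ha hac) α (mem_succ.2 (.inr rfl)))

theorem exists_ordinal_embeds (t : X) : ∃ α j, IsOrdinal E α ∧ Embeds E t α j := by
  obtain ⟨c, hc⟩ := exists_isChoice (E := E) t
  obtain ⟨F, α, h, hF⟩ := exists_surjective_isAttempt hc
  obtain ⟨j, -, hj⟩ := exists_rel (Delta0 E) (fun x β => E (opair E β x) F) t α
  refine ⟨α, j, h.isOrdinal, fun x hx => ?_, fun x hx x' hx' β hβ hxj hxj' => ?_⟩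
  · obtain ⟨β, hβ, hβF⟩ := hF x hx
    exact ⟨β, hβ, (hj x β).2 ⟨hx, hβ, hβF⟩⟩
  · rw [hj] at hxj hxj'
    exact IsAttempt.eq_of_opair_mem hc h h β hβ hβ x hx x' hx' hxj.2.2 hxj'.2.2

theorem exists_ordinal_subE_H (B : X) : ∃ α, IsOrdinal E α ∧ SubE E B (H E α) := by
  obtain ⟨t, ht, hBt⟩ := (ModelsM.modelM (E := E)).1.2.2.2.2.2.1 B
  obtain ⟨α, j, hα, hj⟩ := exists_ordinal_embeds (E := E) t
  exact ⟨α, hα, fun y hy => mem_H.2 ⟨t, j, ht, hBt y hy, hj⟩⟩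

end Enumeration

/-! ### `Δ₀^𝒫` formulas are `Δ₂` -/

section Delta0P

variable [ModelsMOSTColl E]

instance Sigma2.exists_subE (f : (Fin n → X) → X) [IsTerm f] (Q : (Fin n → X) → X → Prop)
    [Definable (Sigma2 E) fun v : Fin (n + 1) → X => Q (v ∘ Fin.castSucc) (v (Fin.last n))] :
    Definable (Sigma2 E) fun v => ∃ x, SubE E x (f v) ∧ Q v x :=
  Ex.ex _

instance Sigma2.forall_subE (f : (Fin n → X) → X) [IsTerm f] (Q : (Fin n → X) → X → Prop)
    [hQ : Definable (Sigma2 E) fun v : Fin (n + 1) → X => Q (v ∘ Fin.castSucc) (v (Fin.last n))] :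
    Definable (Sigma2 E) fun v => ∀ x, SubE E x (f v) → Q v x := by
  have := IsBoundedClosed.subst₂ hQ (fun v : Fin (n + 2) → X =>
    (v ∘ Fin.castSucc) ∘ Fin.castSucc) fun v => v (Fin.last (n + 1))
  have hpow : Definable (Pi1 E) fun v : Fin (n + 1) → X =>
      ∀ z, SubE E z (f (v ∘ Fin.castSucc)) → E z (v (Fin.last n)) := inferInstance
  refine .congr (fun v => ∃ p, (∀ z, SubE E z (f v) → E z p) ∧
    ∀ x, E x p → SubE E x (f v) → Q v x) fun v => ⟨fun h => ?_, fun ⟨_, hp, h⟩ x hx => ?_⟩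
  · exact ⟨powerset E (f v), fun z => mem_powerset.2, fun x _ => h x⟩
  · exact h x (hp x hx) hx

theorem delta2_eval {φ : SF n} (hφ : φ.IsDelta0P) :
    Definable (Sigma2 E) (fun v => φ.Eval E v) ∧ Definable (Sigma2 E) fun v => ¬ φ.Eval E v := by
  have body {n : ℕ} {φ : SF (n + 1)} (h : Definable (Sigma2 E) (fun v => φ.Eval E v) ∧
      Definable (Sigma2 E) fun v => ¬ φ.Eval E v) :=
    And.intro (IsBoundedClosed.subst _ (fun v : Fin (n + 1) → X =>
      (Fin.snoc (v ∘ Fin.castSucc) (v (Fin.last n)) : Fin (n + 1) → X)) h.1)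
      (IsBoundedClosed.subst _ (fun v : Fin (n + 1) → X =>
      (Fin.snoc (v ∘ Fin.castSucc) (v (Fin.last n)) : Fin (n + 1) → X)) h.2)
  induction φ with simp only [SF.Eval, not_not, not_and, not_or, not_exists, not_forall,
    exists_prop]
  | mem | eq => exact ⟨inferInstance, inferInstance⟩
  | not φ ih => exact (ih hφ).symm
  | and φ ψ ihφ ihψ | or φ ψ ihφ ihψ =>
    obtain ⟨⟨_, _⟩, ⟨_, _⟩⟩ := And.intro (ihφ hφ.1) (ihψ hφ.2)
    exact ⟨inferInstance, inferInstance⟩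
  | bexMem i φ ih | ballMem i φ ih | bexSub i φ ih | ballSub i φ ih =>
    obtain ⟨_, _⟩ := body (ih hφ)
    exact ⟨inferInstance, inferInstance⟩
  | ex | all => exact hφ.elim

theorem sigma2_eval_snoc {φ : SF (n + 1)} (hφ : Sigma1PC _ φ) (p : Fin n → X) :
    Definable (Sigma2 E) fun v : Fin 1 → X => φ.Eval E (Fin.snoc p (v 0)) := by
  obtain ⟨ψ, hψ, rfl⟩ := hφ
  have := IsBoundedClosed.subst _ (fun v : Fin 2 → X =>
    (Fin.snoc (Fin.snoc p ((v ∘ Fin.castSucc) 0) : Fin (n + 1) → X) (v (Fin.last 1)) :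
      Fin (n + 2) → X)) (delta2_eval (E := E) hψ).1
  exact Ex.ex fun (v : Fin 1 → X) y => ψ.Eval E (Fin.snoc (Fin.snoc p (v 0)) y)

end Delta0P

/-! ### The step of the iteration -/

section Next

variable [ModelsMOSTColl E] {ψ : X → X → Prop} {t d d' d'' h α β : X}

instance Sigma2.eq_H (f g : (Fin n → X) → X) [IsTerm f] [IsTerm g] :
    Definable (Sigma2 E) fun v => f v = H E (g v) := by
  have hsub : Definable (Pi1 E) fun v => ∀ y, InH E (g v) y → E y (f v) := inferInstance
  refine .congr (fun v => (∀ y, E y (f v) → InH E (g v) y) ∧ ∀ y, InH E (g v) y → E y (f v))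
    fun v => ⟨fun hv => ?_, fun ⟨hle, hge⟩ => ModelsM.extensionality (E := E) fun y => ?_⟩
  · simp only [hv, mem_H (E := E), imp_self, implies_true, and_self]
  · exact ⟨fun hy => mem_H.2 (hle y hy), fun hy => hge y (mem_H.1 hy)⟩

variable (E) in
/-- Every element of `d` has an element `x` for which `h` contains a witness of `∃ y, ψ x y`. -/
def Descends (ψ : X → X → Prop) (d h : X) : Prop :=
  ∀ x, E x d → ∃ x', E x' x ∧ ∃ y, E y h ∧ ψ x' y

variable (E) in
/-- `α` is the least ordinal whose `H(α)` contains witnesses for a descent from `d`. -/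
def IsLeastDescent (ψ : X → X → Prop) (d α : X) : Prop :=
  IsOrdinal E α ∧ Descends E ψ d (H E α) ∧ ∀ β, E β α → ¬ Descends E ψ d (H E β)

variable (E) in
/-- `d'` is the successor of `d` in the iteration: the set of all `x ∈ t` for which `∃ y, ψ x y`
has a witness in `H(α)`, with `α` least such that this allows a descent from `d`. Choosing `α`
least makes the relation functional without any appeal to dependent choice. -/
def IsNext (ψ : X → X → Prop) (t d d' : X) : Prop :=
  ∃ α, IsLeastDescent E ψ d α ∧ ∀ x, E x d' ↔ E x t ∧ ∃ y, E y (H E α) ∧ ψ x y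

theorem IsLeastDescent.unique (hα : IsLeastDescent E ψ d α) (hβ : IsLeastDescent E ψ d β) :
    α = β := by
  rcases IsOrdinal.trichotomy hα.1 hβ.1 with h | h | h
  exacts [absurd hα.2.1 (hβ.2.2 α h), h, absurd hβ.2.1 (hα.2.2 β h)]

theorem IsNext.unique (h' : IsNext E ψ t d d') (h'' : IsNext E ψ t d d'') : d' = d'' := by
  obtain ⟨α, hα, hd'⟩ := h'
  obtain ⟨β, hβ, hd''⟩ := h''
  obtain rfl := hα.unique hβ
  exact ModelsM.extensionality (E := E) fun x => (hd' x).trans (hd'' x).symm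

theorem IsNext.mem (h : IsNext E ψ t d d') {x : X} (hx : E x d') : E x t ∧ ∃ y, ψ x y := by
  obtain ⟨α, -, hd'⟩ := h
  obtain ⟨hxt, y, -, hy⟩ := (hd' x).1 hx
  exact ⟨hxt, y, hy⟩

theorem IsNext.exists_mem (h : IsNext E ψ t d d') (ht : TransSet E t) (hd : SubE E d t) {x : X}
    (hx : E x d) : ∃ x', E x' x ∧ E x' d' := by
  obtain ⟨α, hα, hd'⟩ := h
  obtain ⟨x', hx', hy⟩ := hα.2.1 x hx
  exact ⟨x', hx', (hd' x').2 ⟨ht x (hd x hx) x' hx', hy⟩⟩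

section Definability

variable [hψ : Definable (Pi1 E) fun v : Fin 2 → X => ψ (v 0) (v 1)]
  (f g : (Fin n → X) → X) [IsTerm f] [IsTerm g]

include hψ

theorem delta2_of_pi1 : Definable (Sigma2 E) (fun v => ψ (f v) (g v)) ∧
    Definable (Sigma2 E) fun v => ¬ ψ (f v) (g v) :=
  have := Definable.of₂ hψ f g
  have : Definable (Sigma1 E) fun v => ¬ ψ (f v) (g v) := definable_co.1 this
  ⟨inferInstance, inferInstance⟩

instance Sigma2.descends : Definable (Sigma2 E) fun v => Descends E ψ (f v) (g v) := by
  have {k : ℕ} (f g : (Fin k → X) → X) [IsTerm f] [IsTerm g] :=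
    (delta2_of_pi1 (E := E) (ψ := ψ) f g).1
  unfold Descends
  infer_instance

instance Sigma2.not_descends : Definable (Sigma2 E) fun v => ¬ Descends E ψ (f v) (g v) := by
  have {k : ℕ} (f g : (Fin k → X) → X) [IsTerm f] [IsTerm g] :=
    (delta2_of_pi1 (E := E) (ψ := ψ) f g).2
  simp only [Descends, not_forall, not_exists, not_and, exists_prop]
  infer_instance

instance Sigma2.isLeastDescent :
    Definable (Sigma2 E) fun v => IsLeastDescent E ψ (f v) (g v) :=
  .congr (fun v => IsOrdinal E (g v) ∧ (∃ h, h = H E (g v) ∧ Descends E ψ (f v) h) ∧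
    ∀ β, E β (g v) → ∃ h, h = H E β ∧ ¬ Descends E ψ (f v) h) fun v => by
      simp only [IsLeastDescent, exists_eq_left]

instance Sigma2.isNext : Definable (Sigma2 E) fun v => IsNext E ψ t (f v) (g v) := by
  have {k : ℕ} (f g : (Fin k → X) → X) [IsTerm f] [IsTerm g] :=
    (delta2_of_pi1 (E := E) (ψ := ψ) f g).1
  have {k : ℕ} (f g : (Fin k → X) → X) [IsTerm f] [IsTerm g] :=
    (delta2_of_pi1 (E := E) (ψ := ψ) f g).2
  refine .congr (fun v => ∃ α, IsLeastDescent E ψ (f v) α ∧ ∃ h, h = H E α ∧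
    (∀ x, E x (g v) → E x t ∧ ∃ y, E y h ∧ ψ x y) ∧
    ∀ x, E x t → E x (g v) ∨ ∀ y, E y h → ¬ ψ x y) fun v => ?_
  refine exists_congr fun α => and_congr_right fun _ => ?_
  simp only [exists_eq_left]
  grind

end Definability

section Existence

variable [hψ : Definable (Pi1 E) fun v : Fin 2 → X => ψ (v 0) (v 1)]

include hψ

theorem exists_descends (hd : ∀ x, E x d → ∃ x', E x' x ∧ ∃ y, ψ x' y) :
    ∃ h, Descends E ψ d h := by
  have := Definable.of₂ hψ (fun v : Fin 3 → X => v (Fin.last 2))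
    fun v => (v ∘ Fin.castSucc) (1 : Fin 2)
  have : Definable (Pi1 E) fun v : Fin 2 → X => ∃ x', E x' (v 0) ∧ ψ x' (v 1) := inferInstance
  obtain ⟨h, hh⟩ := collection_pi1 (fun x y => ∃ x', E x' x ∧ ψ x' y) fun x hx => by
    obtain ⟨x', hx', y, hy⟩ := hd x hx
    exact ⟨y, x', hx', hy⟩
  refine ⟨h, fun x hx => ?_⟩
  obtain ⟨y, hy, x', hx', hxy⟩ := hh x hx
  exact ⟨x', hx', y, hy, hxy⟩

/-- Below a fixed `α` the relation `y ∈ H(β)` is coded by a set, so that the descent property of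
`H(β)` is `Π₁` in `β` and has a least instance by `Π₁`-Separation. -/
theorem exists_isLeastDescent (hd : Descends E ψ d h) : ∃ α, IsLeastDescent E ψ d α := by
  obtain ⟨α, hα, hh⟩ := exists_ordinal_subE_H (E := E) h
  have hα' := IsOrdinal.succ hα
  obtain ⟨G, -, hG⟩ := exists_rel (Sigma1 E) (fun β y => InH E β y) (succ E α) (H E α)
  have descends_iff {β : X} (hβ : E β (succ E α)) : Descends E ψ d (H E β) ↔
      ∀ x, E x d → ∃ x', E x' x ∧ ∃ y, E y (H E α) ∧ E (opair E β y) G ∧ ψ x' y := by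
    have hβα : SubE E β α := by
      rcases mem_succ.1 hβ with hβ | rfl
      exacts [hα.1 β hβ, fun _ => id]
    refine forall₂_congr fun x _ => exists_congr fun x' => and_congr_right fun _ =>
      exists_congr fun y => ?_
    rw [hG, mem_H (E := E), mem_H (E := E)]
    exact ⟨fun ⟨hy, hψy⟩ => ⟨hy.mono hβα, ⟨hβ, hy.mono hβα, hy⟩, hψy⟩,
      fun ⟨_, ⟨_, _, hy⟩, hψy⟩ => ⟨hy, hψy⟩⟩
  have := Definable.of₂ hψ (fun v : Fin 4 → X => (v ∘ Fin.castSucc) (Fin.last 2))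
    fun v => v (Fin.last 3)
  have : Definable (Pi1 E) fun v : Fin 1 → X => ∀ x, E x d →
    ∃ x', E x' x ∧ ∃ y, E y (H E α) ∧ E (opair E (v 0) y) G ∧ ψ x' y := inferInstance
  have hα_mem : E α (succ E α) := mem_succ.2 (.inr rfl)
  have hdα : Descends E ψ d (H E α) := fun x hx => by
    obtain ⟨x', hx', y, hy, hxy⟩ := hd x hx
    exact ⟨x', hx', y, hh y hy, hxy⟩
  obtain ⟨β, hβ, hdβ, hmin⟩ := exists_minimal (Pi1 E) (fun β => ∀ x, E x d →
    ∃ x', E x' x ∧ ∃ y, E y (H E α) ∧ E (opair E β y) G ∧ ψ x' y)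
    ⟨α, hα_mem, (descends_iff hα_mem).1 hdα⟩
  refine ⟨β, IsOrdinal.mem hα' hβ, (descends_iff hβ).2 hdβ, fun γ hγ hdγ => ?_⟩
  have hγα := hα'.1 β hβ γ hγ
  exact hmin γ hγ hγα ((descends_iff hγα).1 hdγ)

theorem exists_isNext (hd : ∀ x, E x d → ∃ x', E x' x ∧ ∃ y, ψ x' y) :
    ∃ d', IsNext E ψ t d d' := by
  obtain ⟨h, hh⟩ := exists_descends hd
  obtain ⟨α, hα⟩ := exists_isLeastDescent hh
  have := Definable.of₂ hψ (fun v : Fin 2 → X => (v ∘ Fin.castSucc) (0 : Fin 1))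
    fun v => v (Fin.last 1)
  obtain ⟨d', hd'⟩ := separation (Pi1 E) (fun x => ∃ y, E y (H E α) ∧ ψ x y) t
  exact ⟨d', α, hα, hd'⟩

end Existence

end Next

/-! ### The natural numbers of the model -/

section Omega

variable [ModelsM E] {a e k l x s : X}

variable (E) in
/-- The empty set of the model. -/
noncomputable def empty : X :=
  (ModelsM.modelM (E := E)).1.2.1.choose

theorem notMem_empty : ¬ E x (empty E) :=
  (ModelsM.modelM (E := E)).1.2.1.choose_spec x

theorem eq_empty_iff : e = empty E ↔ ∀ x, ¬ E x e :=
  ⟨fun he _ => he ▸ notMem_empty, fun he => ModelsM.extensionality (E := E) fun x =>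
    iff_of_false (he x) notMem_empty⟩

theorem succ_ne_empty : succ E k ≠ empty E :=
  fun h => eq_empty_iff.1 h k (mem_succ.2 (.inr rfl))

theorem succ_injective (h : succ E k = succ E l) : k = l := by
  have hk : E k (succ E l) := h ▸ mem_succ.2 (.inr rfl)
  have hl : E l (succ E k) := h ▸ mem_succ.2 (.inr rfl)
  rcases mem_succ.1 hk with hkl | rfl
  · exact (mem_succ.1 hl).elim (fun hlk => absurd hlk (mem_asymm hkl)) Eq.symm
  · rfl

theorem succOf_iff : SuccOf E x s ↔ s = succ E x := by
  simp only [SuccOf, ← mem_succ (E := E)]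
  exact ⟨ModelsM.extensionality, fun h z => h ▸ Iff.rfl⟩

theorem inductiveSet_iff :
    InductiveSet E a ↔ E (empty E) a ∧ ∀ x, E x a → E (succ E x) a := by
  simp only [InductiveSet, succOf_iff, ← eq_empty_iff, exists_eq_right]

instance Delta0.eq_succ (f g : (Fin n → X) → X) [IsTerm f] [IsTerm g] :
    Definable (Delta0 E) fun v => f v = succ E (g v) :=
  .congr (fun v => (∀ z, E z (f v) → E z (g v) ∨ z = g v) ∧ (∀ z, E z (g v) → E z (f v)) ∧
    E (g v) (f v)) fun v => by
      rw [← succOf_iff, SuccOf]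
      grind

instance Delta0.inductiveSet (f : (Fin n → X) → X) [IsTerm f] :
    Definable (Delta0 E) fun v => InductiveSet E (f v) :=
  .congr (fun v => E (empty E) (f v) ∧ ∀ x, E x (f v) → ∃ s, E s (f v) ∧ s = succ E x)
    fun v => by simp only [inductiveSet_iff, exists_eq_right]

variable (E) in
theorem exists_isOmega : ∃ w, IsOmega E w := by
  obtain ⟨a, ha⟩ := (ModelsM.modelM (E := E)).1.2.2.2.2.2.2.1
  obtain ⟨w, hw⟩ := separation (Delta0 E)
    (fun x => ∀ b, E b (powerset E a) → InductiveSet E b → E x b) a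
  refine ⟨w, inductiveSet_iff.2 ⟨?_, fun x hx => ?_⟩, fun b hb x hx => ?_⟩
  · exact (hw _).2 ⟨(inductiveSet_iff.1 ha).1, fun b _ hb => (inductiveSet_iff.1 hb).1⟩
  · obtain ⟨hxa, hx⟩ := (hw x).1 hx
    exact (hw _).2 ⟨(inductiveSet_iff.1 ha).2 x hxa, fun b hba hb =>
      (inductiveSet_iff.1 hb).2 x (hx b hba hb)⟩
  · obtain ⟨c, hc⟩ := separation (Delta0 E) (fun x => E x b) a
    have hc_ind : InductiveSet E c := by
      rw [inductiveSet_iff] at ha hb ⊢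
      exact ⟨(hc _).2 ⟨ha.1, hb.1⟩, fun y hy =>
        (hc _).2 ((hc y).1 hy |>.imp (ha.2 y) (hb.2 y))⟩
    exact ((hc x).1 (((hw x).1 hx).2 c (mem_powerset.2 fun y hy => ((hc y).1 hy).1) hc_ind)).2

theorem exists_enumeration_omega (hstd : OmegaStandard E) : ∃ (w : X) (f : ℕ → X),
    (∀ x, E x w ↔ ∃ n, x = f n) ∧ f 0 = empty E ∧ ∀ n, f (n + 1) = succ E (f n) := by
  obtain ⟨w, hw⟩ := exists_isOmega E
  obtain ⟨f, hfw, hf, hlt⟩ := hstd w hw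
  obtain ⟨hempty, hsucc⟩ := inductiveSet_iff.1 hw.1
  refine ⟨w, f, fun x => ⟨hf x, ?_⟩, ?_, fun n => ?_⟩
  · rintro ⟨n, rfl⟩
    exact hfw n
  · obtain ⟨k, hk⟩ := hf _ hempty
    obtain rfl | hk_pos := k.eq_zero_or_pos
    · exact hk.symm
    · exact absurd (hk ▸ (hlt 0 k).2 hk_pos) notMem_empty
  · obtain ⟨k, hk⟩ := hf _ (hsucc _ (hfw n))
    have hnk : n < k := (hlt n k).1 (hk ▸ mem_succ.2 (.inr rfl))
    obtain rfl | hlt_k := Nat.eq_or_lt_of_le hnk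
    · exact hk.symm
    · have hmem : E (f (n + 1)) (succ E (f n)) := hk ▸ (hlt (n + 1) k).2 hlt_k
      rcases mem_succ.1 hmem with h | h
      · exact absurd ((hlt _ _).1 h) (by lia)
      · exact absurd ((hlt n n).1 (h ▸ (hlt n (n + 1)).2 n.lt_succ_self)) (lt_irrefl n)

end Omega

/-! ### Iterating a functional `Σ₂` relation -/

section Iteration

variable {N : X → X → Prop} {D : ℕ → X} {F : ℕ → X} {o b g y : X}

variable (E) in
/-- `g` is an approximation to the iteration of `N` from the value `b` at `o`: every member of `g`
is the pair `(o, b)` or arises from another member `(k, h)` as `(k ∪ {k}, h')` with `N h h'`. -/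
def IsApproximation [ModelsM E] (N : X → X → Prop) (o b g : X) : Prop :=
  ∀ q, E q g → q = opair E o b ∨
    ∃ k h k' h', E (opair E k h) g ∧ k' = succ E k ∧ N h h' ∧ q = opair E k' h'

instance Sigma2.isApproximation [ModelsMOSTColl E]
    [hN : Definable (Sigma2 E) fun v : Fin 2 → X => N (v 0) (v 1)]
    (f : (Fin n → X) → X) [IsTerm f] :
    Definable (Sigma2 E) fun v => IsApproximation E N o b (f v) := by
  have {k : ℕ} (f g : (Fin k → X) → X) [IsTerm f] [IsTerm g] := Definable.of₂ hN f g
  unfold IsApproximation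
  infer_instance

section Values

variable [ModelsM E] (hF : ∀ n, F (n + 1) = succ E (F n))
  (hD : ∀ n, N (D n) (D (n + 1)))

include hF hD

theorem IsApproximation.eq (hF0 : F 0 = empty E)
    (hN : ∀ h h' h'', N h h' → N h h'' → h' = h'')
    (hg : IsApproximation E N (F 0) (D 0) g) (n : ℕ) :
    ∀ y, E (opair E (F n) y) g → y = D n := by
  induction n with intro y hy
  | zero =>
    rcases hg _ hy with hq | ⟨k, h, _, h', -, rfl, -, hq⟩
    · exact (opair_inj.1 hq).2
    · exact absurd ((opair_inj.1 hq).1.symm.trans hF0) succ_ne_empty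
  | succ n ih =>
    rcases hg _ hy with hq | ⟨k, h, _, h', hkh, rfl, hhh', hq⟩
    · exact absurd ((hF n).symm.trans ((opair_inj.1 hq).1.trans hF0)) succ_ne_empty
    · obtain ⟨hk, rfl⟩ := opair_inj.1 hq
      obtain rfl := succ_injective ((hF n).symm.trans hk)
      exact hN _ _ _ (ih h hkh ▸ hhh') (hD n)

theorem exists_isApproximation (n : ℕ) :
    ∃ g, IsApproximation E N (F 0) (D 0) g ∧ E (opair E (F n) (D n)) g := by
  induction n with
  | zero => exact ⟨singleton E (opair E (F 0) (D 0)), fun q hq => .inl (mem_singleton.1 hq),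
      mem_singleton.2 rfl⟩
  | succ n ih =>
    obtain ⟨g, hg, hn⟩ := ih
    refine ⟨union E g (singleton E (opair E (F (n + 1)) (D (n + 1)))), fun q hq => ?_,
      mem_union.2 (.inr (mem_singleton.2 rfl))⟩
    rcases mem_union.1 hq with hq | hq
    · exact (hg q hq).imp_right fun ⟨k, h, k', h', hkh, hq⟩ =>
        ⟨k, h, k', h', mem_union.2 (.inl hkh), hq⟩
    · exact .inr ⟨F n, D n, F (n + 1), D (n + 1), mem_union.2 (.inl hn), hF n, hD n,
        mem_singleton.1 hq⟩

end Values

theorem exists_range_iterate [ModelsMOSTColl E] (hstd : OmegaStandard E)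
    [Definable (Sigma2 E) fun v : Fin 2 → X => N (v 0) (v 1)]
    (hN : ∀ h h' h'', N h h' → N h h'' → h' = h'') (hD : ∀ n, N (D n) (D (n + 1))) :
    ∃ r, ∀ y, E y r ↔ ∃ n, y = D n := by
  obtain ⟨w, F, hw, hF0, hF⟩ := exists_enumeration_omega hstd
  have value_iff (n : ℕ) (y : X) :
      (∃ g, IsApproximation E N (F 0) (D 0) g ∧ E (opair E (F n) y) g) ↔ y = D n := by
    refine ⟨fun ⟨g, hg, hy⟩ => hg.eq hF hD hF0 hN n y hy, ?_⟩
    rintro rfl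
    exact exists_isApproximation hF hD n
  obtain ⟨r, hr⟩ := replacement_sigma2
    (fun k y => ∃ g, IsApproximation E N (F 0) (D 0) g ∧ E (opair E k y) g) (w := w)
    fun k hk => by
      obtain ⟨n, rfl⟩ := (hw k).1 hk
      simp only [value_iff, existsUnique_eq]
  refine ⟨r, fun y => (hr y).trans ?_⟩
  simp only [hw, ← value_iff]
  grind

end Iteration

/-! ### Foundation for `Σ₂` classes -/

section Foundation

variable [ModelsMOSTColl E] {x₀ : X}

theorem exists_isNext_sequence {ψ : X → X → Prop}
    [Definable (Pi1 E) fun v : Fin 2 → X => ψ (v 0) (v 1)] (hx₀ : ∃ y, ψ x₀ y)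
    (hψ : ∀ x, (∃ y, ψ x y) → ∃ x', E x' x ∧ ∃ y, ψ x' y) :
    ∃ (t : X) (D : ℕ → X), E x₀ (D 0) ∧ (∀ n, IsNext E ψ t (D n) (D (n + 1))) ∧
      ∀ n x, E x (D n) → ∃ x', E x' x ∧ E x' (D (n + 1)) := by
  obtain ⟨t, ht, hx₀t⟩ := (ModelsM.modelM (E := E)).1.2.2.2.2.2.1 (singleton E x₀)
  let S := {d : X // ∀ x, E x d → E x t ∧ ∃ y, ψ x y}
  have exists_next (d : S) : ∃ d' : S, IsNext E ψ t d.1 d'.1 := by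
    obtain ⟨d', hd'⟩ := exists_isNext (t := t) fun x hx => hψ x (d.2 x hx).2
    exact ⟨⟨d', fun x hx => hd'.mem hx⟩, hd'⟩
  choose next hnext using exists_next
  let D (n : ℕ) : S := next^[n] ⟨singleton E x₀, fun x hx =>
    ⟨hx₀t x hx, (mem_singleton.1 hx).symm ▸ hx₀⟩⟩
  have hD (n : ℕ) : IsNext E ψ t (D n).1 (D (n + 1)).1 := by
    simpa only [D, Function.iterate_succ_apply'] using hnext (D n)
  exact ⟨t, fun n => (D n).1, mem_singleton.2 rfl, hD, fun n x hx =>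
    (hD n).exists_mem ht (fun y hy => ((D n).2 y hy).1) hx⟩

theorem sigma2_foundation (hstd : OmegaStandard E) (C : X → Prop)
    [hC : Definable (Sigma2 E) fun v : Fin 1 → X => C (v 0)] (hx₀ : C x₀) :
    ∃ y, C y ∧ ∀ x, E x y → ¬ C x := by
  obtain ⟨Q, hQ, hCQ⟩ := definable_ex.1 hC
  have hCQ (x : X) : C x ↔ ∃ y, Q ![x] y := hCQ ![x]
  have : Definable (Pi1 E) fun v : Fin 2 → X => Q ![v 0] (v 1) :=
    IsBoundedClosed.subst₂ hQ (fun v => ![v 0]) fun v => v 1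
  by_contra! hmin
  simp only [hCQ] at hx₀ hmin
  obtain ⟨t, D, hD0, hnext, hdesc⟩ := exists_isNext_sequence (ψ := fun x => Q ![x]) hx₀ hmin
  obtain ⟨r, hr⟩ := exists_range_iterate (N := IsNext E _ t) hstd (fun _ _ _ => IsNext.unique) hnext
  have mem_sUnion_r {x : X} : E x (sUnion E r) ↔ ∃ n, E x (D n) := by
    simp only [mem_sUnion (E := E), hr]
    grind
  obtain ⟨x, hx, hx_min⟩ := ModelsM.foundation (mem_sUnion_r.2 ⟨0, hD0⟩)
  obtain ⟨n, hn⟩ := mem_sUnion_r.1 hx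
  obtain ⟨x', hx', hx'n⟩ := hdesc n x hn
  exact hx_min x' hx' (mem_sUnion_r.2 ⟨n + 1, hx'n⟩)

end Foundation

end MOSTModel

/-- every `ω`-standard model of `MOST + Π₁-Collection` satisfies
`Σ₁^𝒫`-Foundation. -/
theorem sigma1P_foundation_in_omega_standard_MOST (X : Type u) (E : X → X → Prop)
    (hM : ModelMOST E) (hColl : CollectionScheme E Pi1C)
    (hstd : OmegaStandard E) : FoundationScheme E Sigma1PC := by
  have : MOSTModel.ModelsMOSTColl E :=
    { modelM := hM.1, separation := hM.2.1, choice := hM.2.2, collection := hColl }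
  intro n φ hφ p ⟨x, hx⟩
  have := MOSTModel.sigma2_eval_snoc (E := E) hφ p
  exact MOSTModel.sigma2_foundation hstd (fun x => φ.Eval E (Fin.snoc p x)) hx
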